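/- arXiv:1907.00272 — 4 statements merged into one kernel-verified Lean document; each statement's English description precedes it below -/
import Mathlib

section
/- For every finite claw-free chordal graph G (equivalently, every NC-path-tree graph G), there exists a dominating set D of G that is independent and whose cardinality equals the minimum cardinality of a dominating set of G. -/
/-!
The statement is the Allan–Laskar theorem on finite claw-free graphs. Among the
dominating sets of minimum cardinality, take `D` spanning the fewest adjacent ordered pairs, and
suppose `u, v ∈ D` are adjacent. Let `P` be the set of vertices dominated by `D` but not by
`D \ {v}`. Then `P` is nonempty by minimality of `D`, and since `v` is dominated by `u`, every
vertex of `P` is a neighbour of `v` that is neither equal nor adjacent to `u`. As there is no claw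
centred at `v` with leaf `u`, the set `P` is a clique, so any `w ∈ P` dominates all of `P`. Hence
exchanging `v` for `w` gives a dominating set of the same cardinality in which `w` is isolated,
so it spans fewer adjacent pairs than `D`, a contradiction.
-/

open SimpleGraph

/-- A set `S` of nodes of a host graph `H` induces a path in `H`:
there is an enumeration of `S` such that two nodes of `S` are adjacent
in `H` iff they are consecutive in the enumeration. -/
def InducesPath {β : Type*} (H : SimpleGraph β) (S : Set β) : Prop :=
  ∃ (n : ℕ) (f : Fin (n + 1) → β), Function.Injective f ∧ Set.range f = S ∧
    ∀ i j : Fin (n + 1), H.Adj (f i) (f j) ↔ (i.val + 1 = j.val ∨ j.val + 1 = i.val)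

/-- Two node sets are non-crossing in a host graph `H`: each set difference
induces a connected (possibly empty) subgraph of `H`. -/
def NonCrossing {β : Type*} (H : SimpleGraph β) (S S' : Set β) : Prop :=
  (H.induce (S \ S')).Preconnected ∧ (H.induce (S' \ S)).Preconnected

/-- The claw `K_{1,3}`: vertex `0` adjacent to `1`, `2`, `3`, which are pairwise nonadjacent. -/
def claw : SimpleGraph (Fin 4) := SimpleGraph.fromRel (fun a b => a = 0 ∨ b = 0)

/-- A graph is claw-free when it has no induced subgraph isomorphic to `K_{1,3}`. -/
def ClawFree {V : Type*} (G : SimpleGraph V) : Prop := ¬ Nonempty (claw ↪g G)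

/-- A graph is chordal when it has no induced cycle of length at least four. -/
def Chordal {V : Type*} (G : SimpleGraph V) : Prop :=
  ∀ n : ℕ, 4 ≤ n → ¬ Nonempty (cycleGraph n ↪g G)

/-- The 3-sun: triangle `0,1,2` and pairwise nonadjacent vertices `3,4,5` with
`3 ~ 0,1`; `4 ~ 1,2`; `5 ~ 2,0`. -/
def threeSun : SimpleGraph (Fin 6) := SimpleGraph.fromRel (fun a b =>
  (a = 0 ∧ b = 1) ∨ (a = 0 ∧ b = 2) ∨ (a = 1 ∧ b = 2) ∨
  (a = 3 ∧ b = 0) ∨ (a = 3 ∧ b = 1) ∨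
  (a = 4 ∧ b = 1) ∨ (a = 4 ∧ b = 2) ∨
  (a = 5 ∧ b = 2) ∨ (a = 5 ∧ b = 0))

/-- The net: triangle `0,1,2` with pendant vertices `3 ~ 0`, `4 ~ 1`, `5 ~ 2`. -/
def net : SimpleGraph (Fin 6) := SimpleGraph.fromRel (fun a b =>
  (a = 0 ∧ b = 1) ∨ (a = 0 ∧ b = 2) ∨ (a = 1 ∧ b = 2) ∨
  (a = 3 ∧ b = 0) ∨ (a = 4 ∧ b = 1) ∨ (a = 5 ∧ b = 2))

/-- `s` is a maximal clique of `G`. -/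
def IsMaxClique {V : Type*} (G : SimpleGraph V) (s : Set V) : Prop :=
  G.IsClique s ∧ ∀ t : Set V, G.IsClique t → s ⊆ t → s = t

/-- `x` is an endpoint of the set `S` (inducing a path in `T`): `x ∈ S` and
`x` has at most one neighbour inside `S`. -/
def IsPathEnd {β : Type*} (T : SimpleGraph β) (S : Set β) (x : β) : Prop :=
  x ∈ S ∧ {y ∈ S | T.Adj x y}.Subsingleton

/-- `x` is a terminal of the model `P` in `T`: it is an endpoint of every path containing it. -/
def IsTerminal {V β : Type*} (T : SimpleGraph β) (P : V → Set β) (x : β) : Prop :=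
  ∀ v : V, x ∈ P v → IsPathEnd T (P v) x

/-- `x` is a junction of the model `P` in `T`: it is an internal (non-endpoint) node of
every path containing it. -/
def IsJunction {V β : Type*} (T : SimpleGraph β) (P : V → Set β) (x : β) : Prop :=
  ∀ v : V, x ∈ P v → ¬ IsPathEnd T (P v) x

/-- `x` is mixed: neither a terminal nor a junction. -/
def IsMixed {V β : Type*} (T : SimpleGraph β) (P : V → Set β) (x : β) : Prop :=
  ¬ IsTerminal T P x ∧ ¬ IsJunction T P x

/-- In the tree `T` rooted at `r`, `a` is an ancestor of `b`:
`a` lies on the unique path from `b` to `r`. -/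
def Ancestor {β : Type*} (T : SimpleGraph β) (r a b : β) : Prop :=
  ∀ w : T.Walk b r, w.IsPath → a ∈ w.support

/-- `S` is a dominating set of `G`. -/
def IsDom {V : Type*} (G : SimpleGraph V) (S : Set V) : Prop :=
  ∀ v : V, v ∈ S ∨ ∃ u ∈ S, G.Adj u v

/-- `S` is a connected dominating set of `G` (nonempty with connected induced subgraph). -/
def IsConnDom {V : Type*} (G : SimpleGraph V) (S : Set V) : Prop :=
  IsDom G S ∧ (G.induce S).Connected

/-- Two vertices are twins when they have the same closed neighbourhood. -/
def Twins {V : Type*} (G : SimpleGraph V) (u v : V) : Prop :=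
  insert u (G.neighborSet u) = insert v (G.neighborSet v)

/-- A path `z 0, …, z (k-1)` in `T` (with `k ≥ 3` nodes) whose two end nodes are terminals
and whose inner nodes all have degree two in `T`. -/
def TerminalPath {V β : Type*} (T : SimpleGraph β) (P : V → Set β) (k : ℕ) (z : ℕ → β) : Prop :=
  3 ≤ k ∧ (∀ i j, i < k → j < k → z i = z j → i = j) ∧
  (∀ i, i + 1 < k → T.Adj (z i) (z (i + 1))) ∧
  IsTerminal T P (z 0) ∧ IsTerminal T P (z (k - 1)) ∧
  ∀ i, 0 < i → i + 1 < k → (T.neighborSet (z i)).ncard = 2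

/-- Edge part of type (1): the three edges incident to a junction `x`,
whose three neighbours are all terminals. -/
def StarPart {V β : Type*} (T : SimpleGraph β) (P : V → Set β) (p : Set (Sym2 β)) : Prop :=
  ∃ x : β, IsJunction T P x ∧ (T.neighborSet x).ncard = 3 ∧
    (∀ y ∈ T.neighborSet x, IsTerminal T P y) ∧
    p = {e | e ∈ T.edgeSet ∧ x ∈ e}

/-- Edge part of type (2): the edges of a path `z 0, …, z k` in `T` whose two end nodes
are terminals and each of whose internal nodes has degree two in `T` and is mixed. -/
def PathPart {V β : Type*} (T : SimpleGraph β) (P : V → Set β) (p : Set (Sym2 β)) : Prop :=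
  ∃ (k : ℕ) (z : ℕ → β), 1 ≤ k ∧
    (∀ i j, i ≤ k → j ≤ k → z i = z j → i = j) ∧
    (∀ i, i < k → T.Adj (z i) (z (i + 1))) ∧
    IsTerminal T P (z 0) ∧ IsTerminal T P (z k) ∧
    (∀ i, 0 < i → i < k → (T.neighborSet (z i)).ncard = 2 ∧ IsMixed T P (z i)) ∧
    p = {e | ∃ i, i < k ∧ e = s(z i, z (i + 1))}

/-- `v` is a cut-vertex of `G`: deleting `v` leaves a disconnected graph. -/
def IsCutVertex {V : Type*} (G : SimpleGraph V) (v : V) : Prop :=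
  ¬ (G.induce {u | u ≠ v}).Preconnected

/-- `B` is (the vertex set of) a block of `G`: a maximal connected subgraph
having no cut-vertex of its own. -/
def IsBlock {V : Type*} (G : SimpleGraph V) (B : Set V) : Prop :=
  (G.induce B).Connected ∧ (∀ v ∈ B, (G.induce (B \ {v})).Preconnected) ∧
  ∀ B' : Set V, B ⊆ B' → (G.induce B').Connected →
    (∀ v ∈ B', (G.induce (B' \ {v})).Preconnected) → B = B'

/-- The node type of the block-cutpoint tree: cut-vertices and blocks of `G`. -/
def BCVert {V : Type*} (G : SimpleGraph V) : Type _ :=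
  {v : V // IsCutVertex G v} ⊕ {B : Set V // IsBlock G B}

/-- The block-cutpoint tree of `G`: a cut-vertex `c` is joined to a block `B`
exactly when `c ∈ B`. -/
def bcGraph {V : Type*} (G : SimpleGraph V) : SimpleGraph (BCVert G) :=
  SimpleGraph.fromRel (fun a b =>
    ∃ (c : {v : V // IsCutVertex G v}) (B : {B : Set V // IsBlock G B}),
      a = Sum.inl c ∧ b = Sum.inr B ∧ (c : V) ∈ (B : Set V))

/-- The form of claw-freeness used in the exchange step: no vertex `v` has three pairwise distinct,
pairwise nonadjacent neighbours. -/
theorem ClawFree.adj_of_nonadj {V : Type*} {G : SimpleGraph V} (h : ClawFree G)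
    {v u x y : V} (hu : G.Adj v u) (hx : G.Adj v x) (hy : G.Adj v y)
    (hux : u ≠ x) (huy : u ≠ y) (hxy : x ≠ y)
    (nux : ¬ G.Adj u x) (nuy : ¬ G.Adj u y) : G.Adj x y := by
  by_contra nxy
  refine h ⟨⟨⟨![v, u, x, y], ?_⟩, ?_⟩⟩
  · intro a b hab
    have := hu.ne
    have := hx.ne
    have := hy.ne
    fin_cases a <;> fin_cases b <;> simp_all
  · intro a b
    change G.Adj (![v, u, x, y] a) (![v, u, x, y] b) ↔ claw.Adj a b
    have nxu : ¬ G.Adj x u := fun t => nux t.symm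
    have nyu : ¬ G.Adj y u := fun t => nuy t.symm
    have nyx : ¬ G.Adj y x := fun t => nxy t.symm
    fin_cases a <;> fin_cases b <;> simp [claw, hu.symm, hx.symm, hy.symm, *]

/-- The ordered pairs of adjacent vertices of `G` with both members in `S`; independence of `S`
means that there are none. -/
def adjPairs {V : Type*} (G : SimpleGraph V) (S : Set V) : Set (V × V) :=
  {p | p.1 ∈ S ∧ p.2 ∈ S ∧ G.Adj p.1 p.2}

/-- The exchange step: in a minimum dominating set `D`, a vertex `v` with a neighbour `u ∈ D` can be
replaced without changing the cardinality so that the number of adjacent pairs drops. -/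
theorem exists_isDom_adjPairs_lt {V : Type*} [Finite V] {G : SimpleGraph V}
    (hclaw : ClawFree G) {D : Set V} (hD : IsDom G D)
    (hmin : ∀ D' : Set V, IsDom G D' → D.ncard ≤ D'.ncard)
    {u v : V} (hu : u ∈ D) (hv : v ∈ D) (huv : G.Adj u v) :
    ∃ D' : Set V, IsDom G D' ∧ D'.ncard = D.ncard ∧
      (adjPairs G D').ncard < (adjPairs G D).ncard := by
  have hnot : ¬ IsDom G (D \ {v}) := fun h =>
    (Set.ncard_sdiff_singleton_lt_of_mem hv).not_ge (hmin _ h)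
  have huD : u ∈ D \ {v} := ⟨hu, huv.ne⟩
  have private_nbr : ∀ x, x ∉ D \ {v} → (∀ z ∈ D \ {v}, ¬ G.Adj z x) →
      G.Adj v x ∧ u ≠ x ∧ ¬ G.Adj u x := by
    intro x hx hx'
    have hxv : x ≠ v := fun e => hx' u huD (e ▸ huv)
    refine ⟨?_, fun e => hx (e ▸ huD), hx' u huD⟩
    rcases hD x with h | ⟨z, hz, hzx⟩
    · exact absurd ⟨h, hxv⟩ hx
    · by_cases hzv : z = v
      · exact hzv ▸ hzx
      · exact absurd hzx (hx' z ⟨hz, hzv⟩)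
  simp only [IsDom, not_forall, not_or, not_exists, not_and] at hnot
  obtain ⟨w, hw, hw'⟩ := hnot
  obtain ⟨hvw, huw, nuw⟩ := private_nbr w hw hw'
  refine ⟨insert w (D \ {v}), ?_, ?_, ?_⟩
  · intro x
    by_cases hx : x ∈ D \ {v}
    · exact Or.inl (Or.inr hx)
    by_cases hx' : ∃ z ∈ D \ {v}, G.Adj z x
    · obtain ⟨z, hz, hzx⟩ := hx'
      exact Or.inr ⟨z, Or.inr hz, hzx⟩
    push Not at hx'
    obtain ⟨hvx, hux, nux⟩ := private_nbr x hx hx'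
    by_cases hwx : w = x
    · exact Or.inl (Or.inl hwx.symm)
    · exact Or.inr ⟨w, Or.inl rfl,
        hclaw.adj_of_nonadj huv.symm hvw hvx huw hux hwx nuw nux⟩
  · rw [Set.ncard_insert_of_notMem hw, Set.ncard_sdiff_singleton_add_one hv]
  · apply Set.ncard_lt_ncard _ (Set.toFinite _)
    refine ⟨?_, fun h => ?_⟩
    -- the new vertex `w` is isolated, so every surviving pair avoids it
    · rintro ⟨a, b⟩ ⟨ha, hb, hab⟩
      simp only at ha hb hab
      rcases ha with rfl | ha <;> rcases hb with rfl | hb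
      · exact absurd rfl hab.ne
      · exact absurd hab.symm (hw' b hb)
      · exact absurd hab (hw' a ha)
      · exact ⟨ha.1, hb.1, hab⟩
    · have : (u, v) ∈ adjPairs G (insert w (D \ {v})) := h ⟨hu, hv, huv⟩
      rcases this.2.1 with e | e
      · exact hvw.ne e
      · exact e.2 rfl

/-- every finite claw-free chordal graph has an independent dominating set
whose cardinality equals the minimum cardinality of a dominating set. -/
theorem stmt_14 {V : Type*} [Fintype V] (G : SimpleGraph V)
    (hclaw : ClawFree G) (hchord : Chordal G) :
    ∃ D : Set V, IsDom G D ∧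
      (∀ u ∈ D, ∀ v ∈ D, ¬ G.Adj u v) ∧
      ∀ D' : Set V, IsDom G D' → D.ncard ≤ D'.ncard := by
  obtain ⟨D₀, hD₀, hmin₀⟩ := Set.exists_min_image {S : Set V | IsDom G S} Set.ncard
    (Set.toFinite _) ⟨Set.univ, fun v => Or.inl trivial⟩
  obtain ⟨D, ⟨hD, hcard⟩, hmin⟩ := Set.exists_min_image
    {S : Set V | IsDom G S ∧ S.ncard = D₀.ncard} (fun S => (adjPairs G S).ncard)
    (Set.toFinite _) ⟨D₀, hD₀, rfl⟩
  have hle : ∀ D' : Set V, IsDom G D' → D.ncard ≤ D'.ncard := fun D' h =>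
    hcard.trans_le (hmin₀ D' h)
  refine ⟨D, hD, fun u hu v hv huv => ?_, hle⟩
  obtain ⟨D', hD', hc, hlt⟩ := exists_isDom_adjPairs_lt hclaw hD hle hu hv huv
  exact hlt.not_ge (hmin D' ⟨hD', hc.trans hcard⟩)
end

section
/- A finite connected claw-free chordal graph G (equivalently, a connected NC-path-tree graph) has a Hamiltonian cycle if and only if G has at least three vertices and G has no cut-vertex (i.e., G is 2-connected). -/
/-!
A Hamiltonian cycle is a cycle through at least three vertices, and removing any vertex from it
leaves a path through all the others; this gives necessity.

For sufficiency, chordality and the absence of cut-vertices make `G` locally connected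
(`exists_adj_of_partition`): if the neighbourhood of `u` were disconnected, a shortest path in
`G - u` between two parts of it would close up through `u` to an induced cycle of length at least
four. From there the argument is that of Oberly and Sumner for connected, locally connected
claw-free graphs. Take a cycle with a maximum vertex set `S` (local connectivity provides a
triangle to start from). If `S` is not everything, some `v ∉ S` is adjacent to some `u ∈ S`; let
`p`, `q` be the neighbours of `u` on the cycle.

* `v` is not adjacent to `p` or `q`, so `p` and `q` are adjacent by claw-freeness: a cycle vertex
  with an outside neighbour can be bypassed.
* A common neighbour `w` of `u` and `v` is not adjacent to `p` or `q`, as otherwise `w` can be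
  bypassed and `v, w` inserted next to `u`.
* The non-neighbours of `v` in the neighbourhood of `u` form a clique containing `p` and `q`, so
  local connectivity gives `w₁`, `w₂` in the neighbourhood of `u` with `v ~ w₁ ~ w₂ ~ p, q` and
  `w₂` not adjacent to `v`. By the previous point, on no cycle with vertex set `S` is `w₂` next to
  `u` or to `w₁`.
* Let `c`, `d` be the cycle neighbours of `w₂`. If they are adjacent, `w₂` can be moved between `u`
  and `p`; otherwise one of them is adjacent to `w₁`, because there is no claw at `w₂`, and `w₁`
  can be moved between it and `w₂`. Both contradict the previous point (`no_maximal_cycle`).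

To keep these rearrangements light, paths and cycles are handled through their end vertices and
vertex sets (`Seg`, `Around`) and turned into walks only at the end.
-/


open SimpleGraph

/-! ### Consequences of chordality and claw-freeness -/

/-- If a graph has a chordless closed walk `g 0, …, g (n - 1)` without repetition and `4 ≤ n`,
then it is not chordal. -/
lemma not_chordal_of_seq {V : Type*} {G : SimpleGraph V} (n : ℕ) (hn : 4 ≤ n) (g : ℕ → V)
    (hinj : ∀ i j, i < j → j < n → g i ≠ g j)
    (hadj : ∀ i j, i < j → j < n → (G.Adj (g i) (g j) ↔ i + 1 = j ∨ (i = 0 ∧ j + 1 = n))) :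
    ¬ Chordal G := by
  intro h
  refine h n hn ⟨⟨⟨fun i => g i, ?_⟩, ?_⟩⟩
  · intro i j hij
    rcases lt_trichotomy i.val j.val with h1 | h1 | h1
    · exact absurd hij (hinj _ _ h1 j.2)
    · exact Fin.ext h1
    · exact absurd hij.symm (hinj _ _ h1 i.2)
  · have key : ∀ i j : Fin n, i < j →
        (G.Adj (g i) (g j) ↔ (cycleGraph n).Adj i j) := by
      intro i j hij
      rw [hadj i j hij j.2, cycleGraph_adj', Fin.sub_val_of_le hij.le, Fin.coe_sub_iff_lt.2 hij]
      have := i.2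
      have := j.2
      have : i.val < j.val := hij
      omega
    intro i j
    change G.Adj (g i) (g j) ↔ _
    rcases lt_trichotomy i j with h1 | h1 | h1
    · exact key i j h1
    · subst h1
      simp
    · rw [G.adj_comm, key j i h1, SimpleGraph.adj_comm]

/-- In a chordal graph the neighbourhood of a vertex `u` that is not a cut-vertex is connected:
any partition of it into two nonempty parts is crossed by an edge. Otherwise a shortest path of
`G - u` from one part to the other has length at least two and no inner vertex adjacent to `u`,
so together with `u` it forms an induced cycle of length at least four. -/
lemma exists_adj_of_partition {V : Type*} {G : SimpleGraph V} (hchord : Chordal G) {u : V}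
    (hu : ¬ IsCutVertex G u) (A B : Set V) (hAB : ∀ x, G.Adj u x ↔ x ∈ A ∨ x ∈ B)
    (hdisj : ∀ x ∈ A, x ∉ B) {a b : V} (ha : a ∈ A) (hb : b ∈ B) :
    ∃ x ∈ A, ∃ y ∈ B, G.Adj x y := by
  classical
  by_contra! hno
  have hex : ∃ k, ∃ f : ℕ → V, f 0 ∈ A ∧ f k ∈ B ∧ (∀ i ≤ k, f i ≠ u) ∧
      ∀ i < k, G.Adj (f i) (f (i + 1)) := by
    have hau : a ≠ u := ((hAB a).2 (Or.inl ha)).ne'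
    have hbu : b ≠ u := ((hAB b).2 (Or.inr hb)).ne'
    obtain ⟨w⟩ := not_not.1 hu ⟨a, hau⟩ ⟨b, hbu⟩
    refine ⟨w.length, fun i => (w.getVert i).1, ?_, ?_, fun i _ => (w.getVert i).2, ?_⟩
    · simpa using ha
    · simpa using hb
    · intro i hi
      exact w.adj_getVert_succ hi
  obtain ⟨f, f0, fk, fu, fadj⟩ := Nat.find_spec hex
  have hmin : ∀ m, m < Nat.find hex → ∀ g : ℕ → V, g 0 ∈ A → g m ∈ B → (∀ i ≤ m, g i ≠ u) →
      ¬ ∀ i < m, G.Adj (g i) (g (i + 1)) :=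
    fun m hm g h1 h2 h3 h4 => Nat.find_min hex hm ⟨g, h1, h2, h3, h4⟩
  set k := Nat.find hex with hk
  clear_value k
  have hnA : ∀ i, 0 < i → i ≤ k → f i ∉ A := by
    intro i hi hik hA
    refine hmin (k - i) (by omega) (fun t => f (t + i)) (by simpa using hA) ?_ ?_ ?_
    · simpa [Nat.sub_add_cancel hik] using fk
    · exact fun t ht => fu _ (by omega)
    · intro t ht
      have := fadj (t + i) (by omega)
      rwa [show t + i + 1 = t + 1 + i by omega] at this
  have hnB : ∀ i, i < k → f i ∉ B := fun i hik hB =>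
    hmin i hik f f0 hB (fun t ht => fu _ (by omega)) (fun t ht => fadj t (by omega))
  have hinj : ∀ i j, i < j → j ≤ k → f i ≠ f j := by
    intro i j hij hjk he
    refine hmin (k - (j - i)) (by omega) (fun t => if t ≤ i then f t else f (t + (j - i)))
      (by simpa using f0) ?_ ?_ ?_
    · by_cases h : k - (j - i) ≤ i
      · have h1 : k - (j - i) = i := by omega
        have h2 : k = j := by omega
        simp only [h1, le_refl, if_true]
        rw [he, ← h2]
        exact fk
      · simp only [h, if_false]
        rwa [Nat.sub_add_cancel (by omega)]
    · intro t ht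
      split_ifs
      · exact fu _ (by omega)
      · exact fu _ (by omega)
    · intro t ht
      split_ifs with h1 h2 h2
      · exact fadj t (by omega)
      · have h3 : t = i := by omega
        rw [h3, he, show i + 1 + (j - i) = j + 1 by omega]
        exact fadj j (by omega)
      · omega
      · have := fadj (t + (j - i)) (by omega)
        rwa [show t + (j - i) + 1 = t + 1 + (j - i) by omega] at this
  have hchordless : ∀ i j, i + 1 < j → j ≤ k → ¬ G.Adj (f i) (f j) := by
    intro i j hij hjk he
    refine hmin (k - (j - i - 1)) (by omega)
      (fun t => if t ≤ i then f t else f (t + (j - i - 1))) (by simpa using f0) ?_ ?_ ?_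
    · have h : ¬ k - (j - i - 1) ≤ i := by omega
      simp only [h, if_false]
      rwa [Nat.sub_add_cancel (by omega)]
    · intro t ht
      split_ifs
      · exact fu _ (by omega)
      · exact fu _ (by omega)
    · intro t ht
      split_ifs with h1 h2 h2
      · exact fadj t (by omega)
      · have h3 : t = i := by omega
        rw [h3, show i + 1 + (j - i - 1) = j by omega]
        exact he
      · omega
      · have := fadj (t + (j - i - 1)) (by omega)
        rwa [show t + (j - i - 1) + 1 = t + 1 + (j - i - 1) by omega] at this
  have hk2 : 2 ≤ k := by
    by_contra hlt
    interval_cases k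
    · exact hdisj _ f0 fk
    · exact hno _ f0 _ fk (fadj 0 (by omega))
  refine not_chordal_of_seq (k + 2) (by omega) (fun i => if i ≤ k then f i else u)
    ?_ ?_ hchord
  · intro i j hij hj
    have hi : i ≤ k := by omega
    by_cases h : j ≤ k
    · simpa only [hi, h, if_true] using hinj i j hij h
    · simpa only [hi, h, if_true, if_false] using fu i hi
  · intro i j hij hj
    have hi : i ≤ k := by omega
    by_cases h : j ≤ k
    · simp only [hi, h, if_true]
      constructor
      · intro hadj
        by_contra hc
        exact hchordless i j (by omega) h hadj
      · rintro (h1 | h1)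
        · subst h1
          exact fadj i (by omega)
        · omega
    · simp only [hi, h, if_true, if_false]
      rw [G.adj_comm, hAB]
      constructor
      · rintro (hA | hB)
        · have : i = 0 := by
            by_contra h0
            exact hnA i (by omega) hi hA
          omega
        · have : i = k := by
            by_contra h0
            exact hnB i (by omega) hB
          omega
      · rintro (h1 | h1)
        · right
          rwa [show i = k by omega]
        · left
          rwa [h1.1]

/-- In a claw-free graph, among three distinct neighbours of a vertex some two are adjacent. -/
lemma ClawFree.adj_of_three {V : Type*} {G : SimpleGraph V} (h : ClawFree G) {u x y z : V}
    (hx : G.Adj u x) (hy : G.Adj u y) (hz : G.Adj u z) (hxy : x ≠ y) (hxz : x ≠ z)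
    (hyz : y ≠ z) : G.Adj x y ∨ G.Adj x z ∨ G.Adj y z := by
  by_contra! hc
  obtain ⟨h1, h2, h3⟩ := hc
  have := hx.ne
  have := hy.ne
  have := hz.ne
  refine h ⟨⟨⟨![u, x, y, z], ?_⟩, ?_⟩⟩
  · intro i j hij
    fin_cases i <;> fin_cases j <;> simp_all [eq_comm]
  · intro i j
    change G.Adj (![u, x, y, z] i) (![u, x, y, z] j) ↔ _
    fin_cases i <;> fin_cases j <;>
      simp_all [claw, SimpleGraph.fromRel_adj, SimpleGraph.adj_comm]

/-! ### Paths and cycles with a prescribed vertex set -/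

section Segments

variable {V : Type*} [DecidableEq V] {G : SimpleGraph V}

/-- `Seg G a b S`: there is a path of `G` from `a` to `b` whose vertex set is exactly `S`. -/
inductive Seg (G : SimpleGraph V) : V → V → Finset V → Prop
  | single (a : V) : Seg G a a {a}
  | cons {a b c : V} {S : Finset V} :
      G.Adj a b → Seg G b c S → a ∉ S → Seg G a c (insert a S)

/-- `Around G u p q S`: there is a cycle of `G` with vertex set `S` on which `p` and `q` are the
two (distinct) neighbours of `u`. -/
def Around (G : SimpleGraph V) (u p q : V) (S : Finset V) : Prop :=
  u ∈ S ∧ p ≠ q ∧ G.Adj u p ∧ G.Adj u q ∧ Seg G p q (S.erase u)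

lemma Seg.left_mem {a b : V} {S : Finset V} (h : Seg G a b S) : a ∈ S := by
  cases h <;> simp

lemma Seg.right_mem {a b : V} {S : Finset V} (h : Seg G a b S) : b ∈ S := by
  induction h <;> simp_all

lemma Seg.join {a b c d : V} {S T U : Finset V} (h : Seg G a b S) (hbc : G.Adj b c)
    (h2 : Seg G c d T) (hd : Disjoint S T) (hU : S ∪ T = U) : Seg G a d U := by
  subst hU
  induction h with
  | single a => exact Seg.cons hbc h2 (by simpa using hd)
  | cons hadj _ hn ih =>
    rw [Finset.disjoint_insert_left] at hd
    rw [Finset.insert_union]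
    exact Seg.cons hadj (ih hbc hd.2) (by simp [hn, hd.1])

lemma Seg.reverse {a b : V} {S : Finset V} (h : Seg G a b S) : Seg G b a S := by
  induction h with
  | single a => exact Seg.single a
  | cons hadj _ hn ih =>
    exact ih.join hadj.symm (Seg.single _) (by simpa using hn) (by ext; simp)

lemma Seg.split {a b w : V} {S : Finset V} (h : Seg G a b S) (hw : w ∈ S) (hwa : w ≠ a) :
    ∃ c S₁ S₂, Seg G a c S₁ ∧ G.Adj c w ∧ Seg G w b S₂ ∧ Disjoint S₁ S₂ ∧ S₁ ∪ S₂ = S := by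
  induction h with
  | single a => simp_all
  | @cons a x b S hadj h hn ih =>
    have hwS : w ∈ S := by simpa [hwa] using hw
    by_cases hwx : w = x
    · subst hwx
      exact ⟨a, {a}, S, Seg.single a, hadj, h, by simpa using hn, rfl⟩
    · obtain ⟨c, S₁, S₂, h1, h2, h3, h4, h5⟩ := ih hwS hwx
      subst h5
      refine ⟨c, insert a S₁, S₂, Seg.cons hadj h1 (by simp_all), h2, h3, ?_, by simp⟩
      simp_all

lemma Seg.uncons {a b : V} {S : Finset V} (h : Seg G a b S) (hab : a ≠ b) :
    ∃ c, G.Adj a c ∧ Seg G c b (S.erase a) := by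
  cases h with
  | single => exact absurd rfl hab
  | cons hadj h hn => exact ⟨_, hadj, by rwa [Finset.erase_insert hn]⟩

lemma Seg.exists_walk {a b : V} {S : Finset V} (h : Seg G a b S) :
    ∃ w : G.Walk a b, w.IsPath ∧ (∀ x, x ∈ w.support ↔ x ∈ S) ∧ w.length + 1 = S.card := by
  induction h with
  | single a => exact ⟨.nil, by simp, by simp, by simp⟩
  | cons hadj _ hn ih =>
    obtain ⟨w, h1, h2, h3⟩ := ih
    refine ⟨.cons hadj w, ?_, ?_, ?_⟩
    · rw [Walk.cons_isPath_iff, h2]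
      exact ⟨h1, hn⟩
    · simp [h2]
    · rw [Walk.length_cons, h3, Finset.card_insert_of_notMem hn]

lemma Around.swap {u p q : V} {S : Finset V} (h : Around G u p q S) : Around G u q p S :=
  ⟨h.1, h.2.1.symm, h.2.2.2.1, h.2.2.1, h.2.2.2.2.reverse⟩

/-- Cutting the cycle after `u`: the path from `p` around to `u`. -/
lemma Around.seg {u p q : V} {S : Finset V} (h : Around G u p q S) : Seg G p u S := by
  obtain ⟨hu, -, -, hq, hs⟩ := h
  exact hs.join hq.symm (Seg.single u) (by simp) (by ext x; simp; grind)

/-- The same cycle seen from the vertex next to `u`. -/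
lemma Around.next {u p q : V} {S : Finset V} (h : Around G u p q S) : ∃ e, Around G p u e S := by
  obtain ⟨e, h1, h2⟩ := h.2.2.2.2.uncons h.2.1
  have hp := Finset.mem_of_mem_erase h.2.2.2.2.left_mem
  refine ⟨e, hp, ?_, h.2.2.1.symm, h1, ?_⟩
  · rintro rfl
    have := h2.left_mem
    simp at this
  · refine (h2.join h.2.2.2.1.symm (Seg.single u) (by simp) ?_).reverse
    have := h.1
    have := h.2.2.1.ne
    ext x
    simp
    grind

/-- The same cycle seen from a vertex `w` that is neither `u` nor next to `u`; if the two
neighbours `c`, `d` of `w` are adjacent, then `w` can be bypassed. -/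
lemma Around.move {u p q w : V} {S : Finset V} (h : Around G u p q S) (hw : w ∈ S)
    (hwu : w ≠ u) (hwp : w ≠ p) (hwq : w ≠ q) :
    ∃ c d, Around G w c d S ∧ (G.Adj c d → Seg G p q ((S.erase u).erase w)) := by
  obtain ⟨hu, hpq, hup, huq, hs⟩ := h
  obtain ⟨c, S₁, S₂, h1, h2, h3, h4, h5⟩ := hs.split (Finset.mem_erase.2 ⟨hwu, hw⟩) hwp
  obtain ⟨d, h6, h7⟩ := h3.uncons hwq
  have hw2 := h3.left_mem
  have hw1 : w ∉ S₁ := Finset.disjoint_right.1 h4 hw2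
  have hd := Finset.mem_of_mem_erase h7.left_mem
  have hc := h1.right_mem
  have hu1 : u ∉ S₁ ∪ S₂ := by simp [h5]
  have hS : ∀ x, x ∈ S ↔ x = u ∨ x ∈ S₁ ∨ x ∈ S₂ := by
    intro x
    have := Finset.ext_iff.1 h5 x
    simp only [Finset.mem_union, Finset.mem_erase] at this
    by_cases hx : x = u
    · simp [hx, hu]
    · simp_all
  rw [Finset.mem_union, not_or] at hu1
  rw [Finset.disjoint_left] at h4
  refine ⟨c, d, ⟨hw, fun hcd => h4 hc (hcd ▸ hd), h2.symm, h6, ?_⟩, fun hcd => ?_⟩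
  · have h8 : Seg G d u (insert u (S₂.erase w)) :=
      h7.join huq.symm (Seg.single u) (by simp [hu1.2]) (by ext x; simp)
    refine (h8.join hup h1 ?_ ?_).reverse
    · rw [Finset.disjoint_left]
      grind
    · ext x
      have := hS x
      grind
  · refine h1.join hcd h7 ?_ ?_
    · rw [Finset.disjoint_left]
      grind
    · ext x
      have := hS x
      grind

/-- The same cycle seen from an arbitrary vertex of it. -/
lemma Around.exists_of_mem {u p q w : V} {S : Finset V} (h : Around G u p q S) (hw : w ∈ S) :
    ∃ c d, Around G w c d S := by
  by_cases hwu : w = u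
  · exact ⟨p, q, hwu ▸ h⟩
  by_cases hwp : w = p
  · exact ⟨u, hwp ▸ h.next⟩
  by_cases hwq : w = q
  · exact ⟨u, hwq ▸ h.swap.next⟩
  obtain ⟨c, d, h1, -⟩ := h.move hw hwu hwp hwq
  exact ⟨c, d, h1⟩

/-! ### Enlarging a cycle -/

/-- A cycle with vertex set `S` can be enlarged by an outside vertex `v` attached to it, provided
`G` is chordal, claw-free and has no cut-vertex. Here `hM` says that no such enlargement exists:
no path through all of `S` is closed up by a vertex outside `S`. -/
lemma no_maximal_cycle (hclaw : ClawFree G) (hchord : Chordal G)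
    (hcut : ∀ v : V, ¬ IsCutVertex G v) {S : Finset V}
    (hM : ∀ v ∉ S, ∀ x y, Seg G x y S → x ≠ y → G.Adj v x → ¬ G.Adj v y)
    {u v p q : V} (hA : Around G u p q S) (hv : v ∉ S) (hvu : G.Adj u v) : False := by
  have mem : ∀ {u p q : V}, Around G u p q S → p ∈ S ∧ q ∈ S := fun h =>
    ⟨Finset.mem_of_mem_erase h.2.2.2.2.left_mem, Finset.mem_of_mem_erase h.2.2.2.2.right_mem⟩
  -- `v` cannot be inserted next to `u`.
  have fact0 : ∀ {v u p q : V}, v ∉ S → Around G u p q S → G.Adj u v → ¬ G.Adj v p := by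
    intro v u p q hv h huv hvp
    exact hM v hv p u h.seg h.2.2.1.ne' hvp huv.symm
  -- Hence, by claw-freeness, `u` can be bypassed.
  have fact1 : ∀ {v u p q : V}, v ∉ S → Around G u p q S → G.Adj u v → G.Adj p q := by
    intro v u p q hv h huv
    have hp : v ≠ p := fun e => hv (e ▸ (mem h).1)
    have hq : v ≠ q := fun e => hv (e ▸ (mem h).2)
    rcases hclaw.adj_of_three huv h.2.2.1 h.2.2.2.1 hp hq h.2.1 with h1 | h1 | h1
    · exact absurd h1 (fact0 hv h huv)
    · exact absurd h1 (fact0 hv h.swap huv)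
    · exact h1
  -- A common neighbour `w` of `u` and `v` is not adjacent to a cycle neighbour `p` of `u`:
  -- otherwise `v, w` could be inserted between `u` and `p`, with `w` bypassed at its old place.
  have fact2 : ∀ {v u p q w : V}, v ∉ S → Around G u p q S → G.Adj u v → G.Adj u w →
      G.Adj v w → ¬ G.Adj w p := by
    intro v u p q w hv h huv huw hvw hwp
    by_cases hw : w ∈ S
    · obtain ⟨c, d, h1, h2⟩ := h.move hw huw.ne' hwp.ne
        (fun e => fact0 hv h.swap huv (e ▸ hvw))
      have h3 := h2 (fact1 hv h1 hvw.symm)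
      have h4 : Seg G w q (S.erase u) := by
        have := Seg.cons hwp h3 (by simp)
        rwa [Finset.insert_erase (by simp [hw, huw.ne'])] at this
      have h5 : Seg G w u S := h4.join h.2.2.2.1.symm (Seg.single u) (by simp)
        (by have := h.1; ext x; simp; grind)
      exact hM v hv w u h5 huw.ne' hvw huv.symm
    · exact fact0 hw h huw hwp
  have hvp := fact0 hv hA hvu
  -- Local connectivity at `u` yields an edge `w₁ w₂` between the closed neighbourhood of `v` and
  -- its complement, both taken within the neighbourhood of `u`.
  obtain ⟨w₁, ⟨hu1, hv1⟩, w₂, ⟨hu2, hv2⟩, h12⟩ := exists_adj_of_partition hchord (hcut u)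
    {x | G.Adj u x ∧ (x = v ∨ G.Adj v x)} {x | G.Adj u x ∧ ¬ (x = v ∨ G.Adj v x)}
    (by intro x; simp only [Set.mem_ofPred_eq]; tauto)
    (by intro x hx; simp only [Set.mem_ofPred_eq] at hx ⊢; tauto)
    (a := v) (b := p) ⟨hvu, Or.inl rfl⟩
    ⟨hA.2.2.1, by
      rintro (h | h)
      · exact hv (h ▸ (mem hA).1)
      · exact hvp h⟩
  rw [not_or] at hv2
  replace hv1 : G.Adj v w₁ := by
    rcases hv1 with h | h
    · exact absurd (h ▸ h12) hv2.2
    · exact h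
  -- `w₂` and `p` are both nonadjacent to `v`, so they are adjacent to each other.
  have hw2p : ∀ {p q : V}, Around G u p q S → p ≠ w₂ ∧ G.Adj w₂ p := by
    intro p q h
    have h1 := fact2 hv h hvu hu1 hv1
    have h2 : p ≠ w₂ := fun e => h1 (e ▸ h12)
    refine ⟨h2, ?_⟩
    have hp : v ≠ p := fun e => hv (e ▸ (mem h).1)
    rcases hclaw.adj_of_three hvu hu2 h.2.2.1 (Ne.symm hv2.1) hp h2.symm with h3 | h3 | h3
    · exact absurd h3 hv2.2
    · exact absurd h3 (fact0 hv h hvu)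
    · exact h3
  -- By the symmetry between `u` and `w₁`, the vertices `w₁` and `w₂` are not consecutive either.
  have hw1w2 : ∀ {e f : V}, Around G w₁ e f S → e ≠ w₂ := by
    intro e f h he
    exact fact2 hv h hv1.symm hu1.symm hvu.symm (he ▸ hu2)
  have hw1S : w₁ ∈ S := by
    by_contra hw
    exact fact2 hw hA hu1 hu2 h12 (hw2p hA).2
  have hw2S : w₂ ∈ S := by
    by_contra hw
    exact fact0 hw hA hu2 (hw2p hA).2
  obtain ⟨c, d, hcd, hby⟩ := hA.move hw2S hu2.ne' (hw2p hA).1.symm (hw2p hA.swap).1.symm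
  by_cases hc : G.Adj c d
  · -- Move `w₂` between `u` and `p`; then `u` and `w₂` are consecutive.
    have h1 : Seg G w₂ q (S.erase u) := by
      have := Seg.cons (hw2p hA).2 (hby hc) (by simp)
      rwa [Finset.insert_erase (by simp [hw2S, hu2.ne'])] at this
    exact (hw2p ⟨hA.1, (hw2p hA.swap).1.symm, hu2, hA.2.2.2.1, h1⟩).1 rfl
  · -- Move `w₁` between `w₂` and `c`; then `w₁` and `w₂` are consecutive.
    have main : ∀ {c d : V}, Around G w₂ c d S → w₁ ≠ c → w₁ ≠ d → G.Adj w₁ c → False := by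
      intro c d h hc hd hadj
      obtain ⟨e, f, h1, h2⟩ := h.move hw1S h12.ne hc hd
      have h3 := h2 (fact1 hv h1 hv1.symm)
      have h4 : Seg G c w₂ (S.erase w₁) := by
        refine h3.join h.2.2.2.1.symm (Seg.single w₂) (by simp) ?_
        have := h12.ne
        ext x
        simp
        grind
      exact hw1w2 (Around.swap ⟨hw1S, fun e => by
        have := h3.left_mem
        simp [e] at this, hadj, h12, h4⟩) rfl
    have hne : ∀ {c d : V}, Around G w₂ c d S → w₁ ≠ c := by
      rintro c d h rfl
      obtain ⟨e, h1⟩ := h.next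
      exact hw1w2 h1 rfl
    rcases hclaw.adj_of_three h12.symm hcd.2.2.1 hcd.2.2.2.1 (hne hcd) (hne hcd.swap) hcd.2.1
      with h | h | h
    · exact main hcd (hne hcd) (hne hcd.swap) h
    · exact main hcd.swap (hne hcd.swap) (hne hcd) h
    · exact hc h

end Segments

/-! ### Cycles and Hamiltonicity -/

/-- A set of vertices of a connected graph that is neither empty nor everything is left by
some edge. -/
lemma exists_boundary_adj {V : Type*} {G : SimpleGraph V} (hconn : G.Connected) (S : Set V)
    {a b : V} (ha : a ∈ S) (hb : b ∉ S) : ∃ x ∈ S, ∃ y ∉ S, G.Adj x y := by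
  obtain ⟨w⟩ := hconn.preconnected a b
  obtain ⟨d, -, h1, h2⟩ := w.exists_boundary_dart S ha hb
  exact ⟨_, h1, _, h2, d.adj⟩

/-- A connected chordal graph without cut-vertices on at least three vertices has a triangle. -/
lemma exists_around {V : Type*} [Fintype V] [DecidableEq V] {G : SimpleGraph V}
    (hconn : G.Connected) (hchord : Chordal G) (h3 : 3 ≤ Fintype.card V)
    (hcut : ∀ v : V, ¬ IsCutVertex G v) : ∃ u p q S, Around G u p q S := by
  have tri : ∀ u a y : V, G.Adj u a → G.Adj u y → a ≠ y → ∃ u p q S, Around G u p q S := by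
    intro u a y ha hy hay
    obtain ⟨x, hx, b, ⟨hb1, hb2⟩, hab⟩ := exists_adj_of_partition hchord (hcut u)
      {a} {x | G.Adj u x ∧ x ≠ a}
      (by
        intro x
        by_cases h : x = a
        · simp [h, ha]
        · simp [h])
      (by simp) (a := a) (b := y) rfl ⟨hy, hay.symm⟩
    rw [Set.mem_singleton_iff] at hx
    subst hx
    refine ⟨u, x, b, {u, x, b}, by simp, hab.ne, ha, hb1, ?_⟩
    have := Seg.cons hab (Seg.single b) (by simpa using hab.ne)
    rwa [Finset.erase_insert (by simp [ha.ne, hb1.ne])]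
  obtain ⟨r, s, t, hrs, hrt, hst⟩ := Fintype.two_lt_card_iff.1 (show 2 < Fintype.card V by omega)
  obtain ⟨x, hx, a, ha, hxa⟩ := exists_boundary_adj hconn {r} rfl
    (show s ∉ ({r} : Set V) from hrs.symm)
  obtain ⟨z, hz⟩ : ∃ z, z ∉ ({x, a} : Set V) := by
    by_contra! hall
    have h1 := hall r
    have h2 := hall s
    have h4 := hall t
    simp only [Set.mem_insert_iff, Set.mem_singleton_iff] at h1 h2 h4
    grind
  obtain ⟨x', hx', y, hy, hxy⟩ := exists_boundary_adj hconn {x, a} (Or.inl rfl) hz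
  simp only [Set.mem_insert_iff, Set.mem_singleton_iff, not_or] at hx' hy
  rcases hx' with h | h
  · subst h
    exact tri _ a y hxa hxy (Ne.symm hy.2)
  · subst h
    exact tri _ x y hxa.symm hxy (Ne.symm hy.1)

lemma Around.exists_isHamiltonianCycle {V : Type*} [Fintype V] [DecidableEq V]
    {G : SimpleGraph V} {u p q : V} (h : Around G u p q Finset.univ) :
    ∃ (a : V) (c : G.Walk a a), c.IsHamiltonianCycle := by
  obtain ⟨-, hpq, hup, huq, hs⟩ := h
  obtain ⟨w, hw, hsup, hlen⟩ := hs.exists_walk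
  refine ⟨u, .cons hup (w.concat huq.symm), ?_⟩
  have hu : u ∉ w.support := by simp [hsup]
  rw [Walk.isHamiltonianCycle_iff_isCycle_and_length_eq, Walk.cons_isCycle_iff]
  refine ⟨⟨hw.concat hu huq.symm, ?_⟩, ?_⟩
  · rw [Walk.edges_concat, List.concat_eq_append, List.mem_append, List.mem_singleton, not_or]
    refine ⟨fun h => hu (w.fst_mem_support_of_mem_edges h), ?_⟩
    rw [Sym2.eq_iff]
    rintro (⟨h, -⟩ | ⟨-, h⟩)
    · exact huq.ne h
    · exact hpq h
  · rw [Finset.card_erase_of_mem (Finset.mem_univ _), Finset.card_univ] at hlen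
    have : 0 < Fintype.card V := Fintype.card_pos_iff.2 ⟨u⟩
    rw [Walk.length_cons, Walk.length_concat]
    omega

lemma not_isCutVertex_of_isHamiltonianCycle {V : Type*} [DecidableEq V] {G : SimpleGraph V}
    {a : V} {c : G.Walk a a} (hc : c.IsHamiltonianCycle) (v : V) : ¬ IsCutVertex G v := by
  refine not_not.2 ?_
  have hr := hc.rotate (hc.mem_support v)
  generalize c.rotate v _ = d at hr
  cases d with
  | nil => exact absurd hr.isCycle (by simp)
  | @cons _ b _ hvb w =>
    have hw : w.IsPath := ((Walk.cons_isCycle_iff w hvb).1 hr.isCycle).1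
    have hb : ∀ x : {u | u ≠ v}, (G.induce {u | u ≠ v}).Reachable ⟨b, hvb.ne'⟩ x := by
      rintro ⟨x, hx⟩
      have hxw : x ∈ w.support := by
        have := hr.mem_support x
        rw [Walk.support_cons, List.mem_cons] at this
        exact this.resolve_left hx
      -- The stretch of the cycle from `b` to `x` ends before returning to `v`.
      have hv : v ∉ (w.takeUntil x hxw).support :=
        Walk.endpoint_notMem_support_takeUntil hw hxw (Ne.symm hx)
      exact ⟨(w.takeUntil x hxw).induce _ fun y hy (h : y = v) => hv (h ▸ hy)⟩
    exact fun x y => (hb x).symm.trans (hb y)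

/-- a finite connected claw-free chordal graph has a Hamiltonian cycle
iff it has at least three vertices and no cut-vertex. -/
theorem stmt_15 {V : Type*} [Fintype V] [DecidableEq V] (G : SimpleGraph V)
    (hconn : G.Connected) (hclaw : ClawFree G) (hchord : Chordal G) :
    (∃ (a : V) (c : G.Walk a a), c.IsHamiltonianCycle) ↔
      (3 ≤ Fintype.card V ∧ ∀ v : V, ¬ IsCutVertex G v) := by
  constructor
  · rintro ⟨a, c, hc⟩
    exact ⟨hc.length_eq ▸ hc.isCycle.three_le_length,
      not_isCutVertex_of_isHamiltonianCycle hc⟩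
  · rintro ⟨h3, hcut⟩
    classical
    obtain ⟨u₀, p₀, q₀, S₀, h₀⟩ := exists_around hconn hchord h3 hcut
    obtain ⟨S, hS, hmax⟩ := Finset.exists_max_image
      (Finset.univ.filter fun S : Finset V => ∃ u p q, Around G u p q S) Finset.card
      ⟨S₀, by simpa using ⟨u₀, p₀, q₀, h₀⟩⟩
    simp only [Finset.mem_filter, Finset.mem_univ, true_and] at hS hmax
    obtain ⟨u, p, q, hA⟩ := hS
    by_cases hu : S = Finset.univ
    · subst hu
      exact hA.exists_isHamiltonianCycle
    · exfalso
      obtain ⟨z, hz⟩ : ∃ z, z ∉ S := by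
        by_contra! h
        exact hu (Finset.eq_univ_iff_forall.2 h)
      obtain ⟨x, hx, v, hv, hxv⟩ := exists_boundary_adj hconn (S : Set V)
        (Finset.mem_coe.2 hA.1) (by simpa using hz)
      rw [Finset.mem_coe] at hx hv
      have hM : ∀ v ∉ S, ∀ x y, Seg G x y S → x ≠ y → G.Adj v x → ¬ G.Adj v y := by
        intro v hv x y hs hxy hvx hvy
        have := hmax (insert v S) ⟨v, x, y, by simp, hxy, hvx, hvy, by
          rwa [Finset.erase_insert hv]⟩
        rw [Finset.card_insert_of_notMem hv] at this
        omega
      obtain ⟨p', q', hB⟩ := hA.exists_of_mem hx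
      exact no_maximal_cycle hclaw hchord hcut hM hB hv hxv
end

section
/- Let G be a finite connected graph with a clique NC-path-tree model ({P_v}, T), and let v be a cut-vertex of G. Then P_v consists of exactly two adjacent nodes x and y of T, both x and y are terminals, and v is the unique vertex of G whose path contains both x and y. -/
/-!
Let `x₀, …, xₙ` be the nodes of `P v` in path order. If every two consecutive cliques
`C xᵢ`, `C xᵢ₊₁` shared a vertex other than `v`, then all neighbours of `v` would be connected to
each other in `G - v`; as `G` is connected, every vertex of `G - v` reaches a neighbour of `v`
without passing through `v`, so `G - v` would be connected (`exists_consecutive_inter`).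
Hence a cut-vertex `v` yields adjacent nodes `x`, `y` with `C x ∩ C y = {v}`.

The rest follows from non-crossing: a path with an internal node removed is disconnected
(`not_preconnected_of_between`).
* If `z ≠ y` were another neighbour of `x` in `P v`, maximality gives `u ∈ C x \ C z`. Then `u ≠ v`,
  so `u ∉ C y`, and `P v \ P u` contains `z` and `y` but not `x` (`eq_of_adj`). Hence `P v = {x, y}`.
* If `x` had two neighbours in some `P w` with `w ≠ v`, they would lie in `P w \ P v`, which misses
  `x` (`isTerminal_of_pair`).
-/

open SimpleGraph

/-- Removing a node `x` of a path leaves its two neighbours `a`, `b` on that path in different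
components; `D` is any set of path nodes containing `a` and `b` but not `x`. -/
lemma not_preconnected_of_between {β : Type*} {T : SimpleGraph β} {S D : Set β}
    (hS : InducesPath T S) {a b x : β} (hx : x ∈ S) (hDS : D ⊆ S) (ha : a ∈ D) (hb : b ∈ D)
    (hxD : x ∉ D) (hab : a ≠ b) (hxa : T.Adj x a) (hxb : T.Adj x b) :
    ¬ (T.induce D).Preconnected := by
  obtain ⟨n, f, hf, rfl, hadj⟩ := hS
  obtain ⟨k, rfl⟩ := hx
  obtain ⟨i, rfl⟩ := hDS ha
  obtain ⟨j, rfl⟩ := hDS hb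
  intro hpre
  -- Being on one fixed side of index `k` propagates along edges of `D`, since steps change the
  -- index by one and index `k` is unavailable.
  have key : ∀ p q : D, (T.induce D).Reachable p q →
      (∃ l : Fin (n + 1), f l = p ∧ l < k) → ∃ l : Fin (n + 1), f l = q ∧ l < k := by
    rintro p q ⟨w⟩
    induction w with
    | nil => exact id
    | @cons p r q h _ ih =>
      rintro ⟨l, hl, hlk⟩
      refine ih ?_
      obtain ⟨m, hm⟩ := hDS r.2
      refine ⟨m, hm, ?_⟩
      have h' : T.Adj (f l) (f m) := by rw [hl, hm]; exact h
      have hmk : m ≠ k := by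
        rintro rfl
        exact hxD (hm ▸ r.2)
      rw [hadj] at h'
      have := Fin.val_ne_of_ne hmk
      rw [Fin.lt_def] at hlk ⊢
      omega
  have h1 := key ⟨f i, ha⟩ ⟨f j, hb⟩ (hpre _ _)
  have h2 := key ⟨f j, hb⟩ ⟨f i, ha⟩ (hpre _ _)
  rw [hadj] at hxa hxb
  have hij : i.val ≠ j.val := fun h => hab (by rw [Fin.ext h])
  simp only [hf.eq_iff, exists_eq_left, Fin.lt_def] at h1 h2
  omega

/-- In a finite graph every clique lies in a maximal one. -/
lemma exists_isMaxClique {V : Type*} [Finite V] {G : SimpleGraph V} {s : Set V}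
    (hs : G.IsClique s) : ∃ t, IsMaxClique G t ∧ s ⊆ t := by
  obtain ⟨t, hst, ht⟩ := Finite.exists_le_maximal (p := fun t : Set V => G.IsClique t) hs
  exact ⟨t, ⟨ht.prop, fun r hr h => ht.eq_of_le hr h⟩, hst⟩

/-- In a connected graph, every vertex `u ≠ v` reaches a neighbour of `v` inside `G - v`. -/
lemma exists_reachable_neighbor {V : Type*} {G : SimpleGraph V} {u v : V} (w : G.Walk u v)
    (hu : u ≠ v) : ∃ p : {u | u ≠ v}, G.Adj v p ∧
      (G.induce {u | u ≠ v}).Reachable ⟨u, hu⟩ p := by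
  induction w with
  | nil => exact absurd rfl hu
  | @cons a b c h w ih =>
    by_cases hb : b = c
    · subst hb
      exact ⟨⟨a, hu⟩, h.symm, Reachable.refl _⟩
    · obtain ⟨p, hp, hr⟩ := ih hb
      have hab : (G.induce {u | u ≠ c}).Adj ⟨a, hu⟩ ⟨b, hb⟩ := h
      exact ⟨p, hp, hab.reachable.trans hr⟩

/-- If `f 0, …, f n` lists all nodes whose cliques contain a cut-vertex `v`, then some two
consecutive listed cliques meet at most in `v`. The index type is `ℕ` so that `f (i + 1)` needs no
bound; values beyond `n` play no role. -/
lemma exists_consecutive_inter {V β : Type*} [Finite V] {G : SimpleGraph V} (hconn : G.Connected)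
    {C : β → Set V} (hCmax : ∀ x : β, IsMaxClique G (C x))
    (hCsurj : ∀ s : Set V, IsMaxClique G s → ∃ x : β, C x = s)
    {v : V} (hv : IsCutVertex G v) {n : ℕ} {f : ℕ → β}
    (hf : ∀ x, v ∈ C x → ∃ i ≤ n, f i = x) :
    ∃ i < n, ∀ u, u ∈ C (f i) → u ∈ C (f (i + 1)) → u = v := by
  by_contra! hcon
  apply hv
  have hclique : ∀ (x : β) (p q : {u | u ≠ v}), p.1 ∈ C x → q.1 ∈ C x →
      (G.induce {u | u ≠ v}).Reachable p q := by
    intro x p q hp hq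
    by_cases hpq : p = q
    · rw [hpq]
    · have : (G.induce {u | u ≠ v}).Adj p q :=
        (hCmax x).1 hp hq (fun h => hpq (Subtype.ext h))
      exact this.reachable
  have hchain : ∀ (d i : ℕ) (p q : {u | u ≠ v}), i + d ≤ n → p.1 ∈ C (f i) →
      q.1 ∈ C (f (i + d)) → (G.induce {u | u ≠ v}).Reachable p q := by
    intro d
    induction d with
    | zero => exact fun i p q _ hp hq => hclique _ p q hp hq
    | succ d ih =>
      intro i p q hi hp hq
      obtain ⟨w, hw, hw', hwv⟩ := hcon (i + d) (by omega)
      exact (ih i p ⟨w, hwv⟩ (by omega) hp hw).trans (hclique _ ⟨w, hwv⟩ q hw' hq)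
  have hnode : ∀ p : V, G.Adj v p → ∃ i ≤ n, p ∈ C (f i) := by
    intro p hp
    have hpair : G.IsClique {v, p} := by
      rw [isClique_pair]
      exact fun _ => hp
    obtain ⟨t, ht, hvt⟩ := exists_isMaxClique hpair
    obtain ⟨x, rfl⟩ := hCsurj t ht
    obtain ⟨i, hi, rfl⟩ := hf x (hvt (by simp))
    exact ⟨i, hi, hvt (by simp)⟩
  have hnbr : ∀ p q : {u | u ≠ v}, G.Adj v p → G.Adj v q →
      (G.induce {u | u ≠ v}).Reachable p q := by
    intro p q hp hq
    obtain ⟨i, hi, hpi⟩ := hnode p hp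
    obtain ⟨j, hj, hqj⟩ := hnode q hq
    rcases le_total i j with h | h
    · obtain ⟨d, rfl⟩ := Nat.exists_eq_add_of_le h
      exact hchain d i p q hj hpi hqj
    · obtain ⟨d, rfl⟩ := Nat.exists_eq_add_of_le h
      exact (hchain d j q p hi hqj hpi).symm
  rintro ⟨a, ha⟩ ⟨b, hb⟩
  obtain ⟨p, hp, hap⟩ := exists_reachable_neighbor (hconn a v).some ha
  obtain ⟨q, hq, hbq⟩ := exists_reachable_neighbor (hconn b v).some hb
  exact hap.trans ((hnbr p q hp hq).trans hbq.symm)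

/-- If the cliques of adjacent nodes `x`, `y` meet only in `v`, then `y` is the only neighbour of
`x` in `P v`. -/
lemma eq_of_adj {V β : Type*} {G : SimpleGraph V} {T : SimpleGraph β} {C : β → Set V}
    (hCinj : Function.Injective C) (hCmax : ∀ x : β, IsMaxClique G (C x))
    {P : V → Set β} (hP : ∀ (v : V) (x : β), x ∈ P v ↔ v ∈ C x)
    (hpath : ∀ v : V, InducesPath T (P v))
    (hnc : ∀ u v : V, u ≠ v → NonCrossing T (P u) (P v))
    {v : V} {x y z : β} (hx : x ∈ P v) (hy : y ∈ P v) (hxy : T.Adj x y)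
    (huniq : ∀ u : V, x ∈ P u → y ∈ P u → u = v) (hz : z ∈ P v) (hxz : T.Adj x z) : z = y := by
  by_contra hzy
  have hnsub : ¬ C x ⊆ C z := fun h => hxz.ne (hCinj ((hCmax x).2 _ (hCmax z).1 h))
  obtain ⟨u, hux, huz⟩ := Set.not_subset.1 hnsub
  have huv : u ≠ v := by
    rintro rfl
    exact huz ((hP _ _).1 hz)
  have huy : y ∉ P u := fun h => huv (huniq u ((hP _ _).2 hux) h)
  exact not_preconnected_of_between (hpath v) hx Set.sdiff_subset
    ⟨hz, fun h => huz ((hP _ _).1 h)⟩ ⟨hy, huy⟩ (fun h => h.2 ((hP _ _).2 hux)) hzy hxz hxy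
    (hnc u v huv).2

lemma isTerminal_of_pair {V β : Type*} {T : SimpleGraph β}
    {P : V → Set β} (hpath : ∀ v : V, InducesPath T (P v))
    (hnc : ∀ u v : V, u ≠ v → NonCrossing T (P u) (P v))
    {v : V} {x y : β} (hPv : P v = {x, y})
    (huniq : ∀ u : V, x ∈ P u → y ∈ P u → u = v) : IsTerminal T P x := by
  intro w hw
  refine ⟨hw, ?_⟩
  rintro a ⟨haw, hxa⟩ b ⟨hbw, hxb⟩
  by_cases hwv : w = v
  · subst hwv
    rw [hPv] at haw hbw
    rw [haw.resolve_left hxa.ne', Set.mem_singleton_iff.1 (hbw.resolve_left hxb.ne')]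
  · by_contra hab
    have hyw : y ∉ P w := fun h => hwv (huniq w hw h)
    have hout : ∀ c ∈ P w, T.Adj x c → c ∉ P v := by
      intro c hc hxc hcv
      rw [hPv] at hcv
      rcases hcv with rfl | rfl
      · exact hxc.ne rfl
      · exact hyw hc
    exact not_preconnected_of_between (hpath w) hw Set.sdiff_subset
      ⟨haw, hout a haw hxa⟩ ⟨hbw, hout b hbw hxb⟩ (fun h => h.2 (by rw [hPv]; simp)) hab hxa hxb
      (hnc w v hwv).1


/-- in a clique NC-path-tree model, the path of a cut-vertex `v` consists of
exactly two adjacent terminal nodes, and `v` is the unique vertex whose path contains both. -/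
theorem stmt_16
    {V β : Type*} [Fintype V] (G : SimpleGraph V) (hconn : G.Connected)
    (T : SimpleGraph β) (hT : T.IsTree)
    (C : β → Set V) (hCinj : Function.Injective C)
    (hCmax : ∀ x : β, IsMaxClique G (C x))
    (hCsurj : ∀ s : Set V, IsMaxClique G s → ∃ x : β, C x = s)
    (P : V → Set β) (hP : ∀ (v : V) (x : β), x ∈ P v ↔ v ∈ C x)
    (hpath : ∀ v : V, InducesPath T (P v))
    (hnc : ∀ u v : V, u ≠ v → NonCrossing T (P u) (P v))
    (v : V) (hv : IsCutVertex G v) :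
    ∃ x y : β, x ≠ y ∧ T.Adj x y ∧ P v = {x, y} ∧
      IsTerminal T P x ∧ IsTerminal T P y ∧
      ∀ u : V, x ∈ P u → y ∈ P u → u = v := by
  obtain ⟨n, f, hf, hrange, hadj⟩ := hpath v
  have hmem : ∀ i, f i ∈ P v := fun i => hrange ▸ Set.mem_range_self i
  obtain ⟨i, hi, hu⟩ := exists_consecutive_inter (C := C) (f := fun i => f (Fin.ofNat (n + 1) i)) (n := n)
    hconn hCmax hCsurj hv (by
      intro x hx
      rw [← hP, ← hrange] at hx
      obtain ⟨j, rfl⟩ := hx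
      exact ⟨j, by omega, by simp⟩)
  have e0 : Fin.ofNat (n + 1) i = ⟨i, by omega⟩ := Fin.ext (Nat.mod_eq_of_lt (by omega))
  have e1 : Fin.ofNat (n + 1) (i + 1) = ⟨i + 1, by omega⟩ :=
    Fin.ext (Nat.mod_eq_of_lt (by omega))
  simp only [e0, e1] at hu
  set I : Fin (n + 1) := ⟨i, by omega⟩ with hI
  set J : Fin (n + 1) := ⟨i + 1, by omega⟩ with hJ
  have hxy : T.Adj (f I) (f J) := (hadj I J).2 (Or.inl rfl)
  have huniq : ∀ u : V, f I ∈ P u → f J ∈ P u → u = v := fun u h1 h2 =>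
    hu u ((hP _ _).1 h1) ((hP _ _).1 h2)
  have huniq' : ∀ u : V, f J ∈ P u → f I ∈ P u → u = v := fun u h1 h2 => huniq u h2 h1
  have hi0 : i = 0 := by
    by_contra h0
    have h := eq_of_adj hCinj hCmax hP hpath hnc (hmem I) (hmem J) hxy huniq
      (hmem ⟨i - 1, by omega⟩) ((hadj _ _).2 (Or.inr (show i - 1 + 1 = i by omega)))
    have := congrArg Fin.val (hf h)
    simp only [hJ] at this
    omega
  have hin : i + 1 = n := by
    by_contra h0
    have h := eq_of_adj hCinj hCmax hP hpath hnc (hmem J) (hmem I) hxy.symm huniq'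
      (hmem ⟨i + 2, by omega⟩) ((hadj _ _).2 (Or.inl rfl))
    have := congrArg Fin.val (hf h)
    simp only [hI] at this
    omega
  have hPv : P v = {f I, f J} := by
    refine Set.Subset.antisymm ?_ (Set.pair_subset (hmem I) (hmem J))
    rw [← hrange]
    rintro _ ⟨k, rfl⟩
    rcases (show k.val = i ∨ k.val = i + 1 by omega) with h | h
    · exact Or.inl (congrArg f (Fin.ext h))
    · exact Or.inr (congrArg f (Fin.ext h))
  exact ⟨f I, f J, hxy.ne, hxy, hPv, isTerminal_of_pair hpath hnc hPv huniq,
    isTerminal_of_pair hpath hnc (hPv.trans (Set.pair_comm _ _)) huniq', huniq⟩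
end

section
/- A finite connected claw-free chordal graph G (equivalently, a connected NC-path-tree graph) has a Hamiltonian path if and only if its block-cutpoint tree BC(G) is a path (where a single node counts as a path). -/
/-!
Call a pair `(s, t)` of vertices *admissible* if neither is a cut-vertex and every cut-vertex
separates `s` from `t`.

If `v 0, …, v m` is a Hamiltonian path, then no edge jumps over a cut-vertex `v i`, whereas some
edge jumps over every other interior vertex. Hence the blocks are exactly the segments between
consecutive cut-vertices (or ends) of the path, and reading cut-vertices and segments along the path
shows that the block-cutpoint tree is a path (`HamEnum.inducesPath_of_pos`). This direction needs
neither claw-freeness nor chordality.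

Conversely, if the block-cutpoint tree is a path, then its end nodes are blocks containing vertices
`s` and `t` that are not cut-vertices, and `(s, t)` is admissible (`exists_adm_of_inducesPath`).
Among all paths with admissible ends take a longest one. It contains every cut-vertex. In the spirit
of the theorem of Oberly and Sumner, suppose that a vertex `x` off this path has a neighbour `w` on
it. Then `w` is not a cut-vertex, so in a chordal graph its neighbourhood is connected
(`Chordal.exists_crossing`), which gives an edge `a b` inside the neighbourhood of `w` with `x`
adjacent to `a` but not to `b`. Claw-freeness at `w`, `a` and `b` provides chords
bypassing these vertices, and in every case the path can be rerouted through `x` to a longer path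
with admissible ends (`Longest.not_adj`), a contradiction. By connectedness the path is Hamiltonian.
-/

open SimpleGraph

/-! ### Connection inside a vertex set -/

/-- `RIn G S x y`: some walk of `G` from `x` to `y` stays inside `S`. -/
def RIn {V : Type*} (G : SimpleGraph V) (S : Set V) (x y : V) : Prop :=
  ∃ p : G.Walk x y, ∀ z ∈ p.support, z ∈ S

namespace RIn

variable {V : Type*} {G : SimpleGraph V} {S T : Set V} {x y z : V}

theorem refl (h : x ∈ S) : RIn G S x x := ⟨.nil, by simpa using h⟩

theorem symm (h : RIn G S x y) : RIn G S y x := by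
  obtain ⟨p, hp⟩ := h
  exact ⟨p.reverse, by simpa using hp⟩

theorem trans (h : RIn G S x y) (h' : RIn G S y z) : RIn G S x z := by
  obtain ⟨p, hp⟩ := h
  obtain ⟨q, hq⟩ := h'
  refine ⟨p.append q, fun t ht => ?_⟩
  rw [Walk.mem_support_append_iff] at ht
  exact ht.elim (hp t) (hq t)

theorem mono (h : RIn G S x y) (hST : S ⊆ T) : RIn G T x y := by
  obtain ⟨p, hp⟩ := h
  exact ⟨p, fun t ht => hST (hp t ht)⟩

theorem of_adj (h : G.Adj x y) (hx : x ∈ S) (hy : y ∈ S) : RIn G S x y :=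
  ⟨h.toWalk, by
    intro z hz
    simp at hz
    rcases hz with rfl | rfl <;> assumption⟩

theorem left_mem (h : RIn G S x y) : x ∈ S := by
  obtain ⟨p, hp⟩ := h
  exact hp _ p.start_mem_support

theorem right_mem (h : RIn G S x y) : y ∈ S := h.symm.left_mem

/-- A property true at `x` and preserved along edges inside `S` holds at `y`. -/
theorem induct (h : RIn G S x y) (P : V → Prop) (hx : P x)
    (hs : ∀ a b, a ∈ S → b ∈ S → G.Adj a b → P a → P b) : P y := by
  obtain ⟨p, hp⟩ := h
  induction p with
  | nil => exact hx
  | cons hadj q ih =>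
    exact ih (hs _ _ (hp _ (by simp)) (hp _ (by simp)) hadj hx)
      (fun z hz => hp z (by simp [hz]))

end RIn

section
variable {V : Type*} {G : SimpleGraph V}

theorem induce_preconnected_iff {S : Set V} :
    (G.induce S).Preconnected ↔ ∀ x ∈ S, ∀ y ∈ S, RIn G S x y := by
  constructor
  · intro h x hx y hy
    obtain ⟨p⟩ := h ⟨x, hx⟩ ⟨y, hy⟩
    have key : ∀ {a b : S} (p : (G.induce S).Walk a b), RIn G S a b := by
      intro a b p
      induction p with
      | nil => exact RIn.refl (Subtype.coe_prop _)
      | cons hadj _ ih => exact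
        (RIn.of_adj (G := G) (S := S) (induce_adj.1 hadj) (Subtype.coe_prop _)
          (Subtype.coe_prop _)).trans ih
    exact key p
  · rintro h ⟨x, hx⟩ ⟨y, hy⟩
    obtain ⟨p, hp⟩ := h x hx y hy
    exact ⟨p.induce S hp⟩

theorem induce_connected_iff {S : Set V} :
    (G.induce S).Connected ↔ S.Nonempty ∧ ∀ x ∈ S, ∀ y ∈ S, RIn G S x y := by
  rw [connected_iff, induce_preconnected_iff, Set.nonempty_coe_sort, and_comm]

theorem not_isCutVertex_iff {w : V} :
    ¬ IsCutVertex G w ↔ ∀ x y, x ≠ w → y ≠ w → RIn G {u | u ≠ w} x y := by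
  rw [IsCutVertex, not_not, induce_preconnected_iff]
  exact ⟨fun h x y hx hy => h x hx y hy, fun h x hx y hy => h x y hx hy⟩

theorem isCutVertex_iff {w : V} :
    IsCutVertex G w ↔ ∃ x y, x ≠ w ∧ y ≠ w ∧ ¬ RIn G {u | u ≠ w} x y := by
  rw [← not_iff_not, not_isCutVertex_iff]
  push Not
  rfl

theorem rIn_of_isChain {l : List V} {S : Set V} (h : l.IsChain G.Adj) (hS : ∀ z ∈ l, z ∈ S) :
    ∀ x ∈ l, ∀ y ∈ l, RIn G S x y := by
  induction l with
  | nil => simp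
  | cons a l ih =>
    have ih' := ih h.tail (fun z hz => hS z (by simp [hz]))
    have key : ∀ y ∈ l, RIn G S a y := by
      intro y hy
      cases l with
      | nil => simp at hy
      | cons b l =>
        rw [List.isChain_cons_cons] at h
        exact (RIn.of_adj h.1 (hS a (by simp)) (hS b (by simp))).trans (ih' b (by simp) y hy)
    intro x hx y hy
    rw [List.mem_cons] at hx hy
    rcases hx with rfl | hx <;> rcases hy with rfl | hy
    · exact RIn.refl (hS _ (by simp))
    · exact key y hy
    · exact (key x hx).symm
    · exact ih' x hx y hy

theorem ClawFree.not_claw (h : ClawFree G) {w x y z : V} (hx : G.Adj w x) (hy : G.Adj w y)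
    (hz : G.Adj w z) (hxy : x ≠ y) (hxz : x ≠ z) (hyz : y ≠ z) :
    G.Adj x y ∨ G.Adj x z ∨ G.Adj y z := by
  by_contra! hc
  obtain ⟨h1, h2, h3⟩ := hc
  apply h
  have h1' := fun e : G.Adj y x => h1 e.symm
  have h2' := fun e : G.Adj z x => h2 e.symm
  have h3' := fun e : G.Adj z y => h3 e.symm
  refine ⟨⟨⟨![w, x, y, z], ?_⟩, ?_⟩⟩
  · intro i j hij
    fin_cases i <;> fin_cases j <;>
      simp_all [hx.ne, hy.ne, hz.ne, hx.ne', hy.ne', hz.ne', hxy.symm, hxz.symm, hyz.symm]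
  · intro i j
    change G.Adj (![w, x, y, z] i) (![w, x, y, z] j) ↔ claw.Adj i j
    fin_cases i <;> fin_cases j <;> simp_all [claw, hx.symm, hy.symm, hz.symm]

/-- In a chordal graph, the neighbourhood of a non-cut-vertex `w` is connected: a subset `X` of it
that misses some neighbour of `w` sends an edge to the rest of the neighbourhood.
Otherwise a shortest path avoiding `w` between the two parts closes up
through `w` to an induced cycle of length at least four. -/
theorem Chordal.exists_crossing (h : Chordal G) {w x y : V} (hw : ¬ IsCutVertex G w)
    (hx : G.Adj w x) (hy : G.Adj w y) (X : V → Prop) (hX : X x) (hY : ¬ X y) :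
    ∃ a b, G.Adj w a ∧ G.Adj w b ∧ X a ∧ ¬ X b ∧ G.Adj a b := by
  classical
  by_contra! hc
  -- `Q k u`: a walk `u 0, …, u k` in `G - w` leads from `X` to the rest of the neighbourhood.
  let Q : ℕ → (ℕ → V) → Prop := fun k u =>
    G.Adj w (u 0) ∧ X (u 0) ∧ G.Adj w (u k) ∧ ¬ X (u k) ∧
      (∀ i ≤ k, u i ≠ w) ∧ ∀ i < k, G.Adj (u i) (u (i + 1))
  have hex : ∃ k u, Q k u := by
    obtain ⟨p, hp⟩ := not_isCutVertex_iff.1 hw x y hx.ne' hy.ne'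
    refine ⟨p.length, p.getVert, ?_⟩
    simp only [Q, Walk.getVert_zero, Walk.getVert_length]
    exact ⟨hx, hX, hy, hY, fun i _ => hp _ (p.getVert_mem_support i),
      fun i hi => p.adj_getVert_succ hi⟩
  obtain ⟨u, h0, hX0, hk, hXk, hne, hadj⟩ := Nat.find_spec hex
  have hmin : ∀ m < Nat.find hex, ∀ v, ¬ Q m v := fun m hm v hv => Nat.find_min hex hm ⟨v, hv⟩
  generalize Nat.find hex = k at *
  have trunc : ∀ i < k, G.Adj w (u i) → X (u i) := by
    intro i hi hwi
    by_contra hXi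
    exact hmin i hi u
      ⟨h0, hX0, hwi, hXi, fun j hj => hne j (by omega), fun j hj => hadj j (by omega)⟩
  have trunc' : ∀ i, 0 < i → i ≤ k → G.Adj w (u i) → ¬ X (u i) := by
    intro i hi hik hwi hXi
    refine hmin (k - i) (by omega) (fun j => u (i + j)) ⟨hwi, hXi, ?_, ?_, ?_, ?_⟩
    · simpa [Nat.add_sub_cancel' hik] using hk
    · simpa [Nat.add_sub_cancel' hik] using hXk
    · exact fun j hj => hne _ (by omega)
    · exact fun j hj => hadj _ (by omega)
  have inner : ∀ i, 0 < i → i < k → ¬ G.Adj w (u i) := fun i h1 h2 h3 =>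
    trunc' i h1 h2.le h3 (trunc i h2 h3)
  have short : ∀ i j, i + 1 < j → j ≤ k → ¬ G.Adj (u i) (u j) := by
    intro i j hij hjk hA
    refine hmin (k - (j - i - 1)) (by omega)
      (fun m => if m ≤ i then u m else u (m + (j - i - 1))) ⟨?_, ?_, ?_, ?_, ?_, ?_⟩
    · simpa using h0
    · simpa using hX0
    · have : ¬ (k - (j - i - 1) ≤ i) := by omega
      simp only [this, if_false]
      rwa [Nat.sub_add_cancel (by omega)]
    · have : ¬ (k - (j - i - 1) ≤ i) := by omega
      simp only [this, if_false]
      rwa [Nat.sub_add_cancel (by omega)]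
    · intro m hm
      dsimp only
      split_ifs
      · exact hne _ (by omega)
      · exact hne _ (by omega)
    · intro m hm
      dsimp only
      by_cases h1 : m + 1 ≤ i
      · rw [if_pos (by omega), if_pos h1]
        exact hadj _ (by omega)
      · by_cases h2 : m ≤ i
        · rw [if_pos h2, if_neg h1]
          have e1 : m = i := by omega
          have e2 : m + 1 + (j - i - 1) = j := by omega
          rw [e2, e1]
          exact hA
        · rw [if_neg h2, if_neg h1]
          have := hadj (m + (j - i - 1)) (by omega)
          rwa [show m + 1 + (j - i - 1) = m + (j - i - 1) + 1 by omega]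
  have inj : ∀ i j, i < j → j ≤ k → u i ≠ u j := by
    intro i j hij hjk he
    rcases hjk.lt_or_eq with hj | rfl
    · exact short i (j + 1) (by omega) (by omega) (he ▸ hadj j hj)
    · exact hXk (he ▸ trunc i hij (he ▸ hk))
  have hk2 : 2 ≤ k := by
    by_contra hlt
    have : k = 0 ∨ k = 1 := by omega
    rcases this with rfl | rfl
    · exact hXk hX0
    · exact hc _ _ h0 hk hX0 hXk (hadj 0 (by omega))
  have uadj : ∀ i j, i ≤ k → j ≤ k → (G.Adj (u i) (u j) ↔ i + 1 = j ∨ j + 1 = i) := by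
    intro i j hi hj
    constructor
    · intro hA
      by_contra! hne'
      rcases lt_trichotomy i j with hlt | rfl | hlt
      · exact short i j (by omega) hj hA
      · exact G.loopless.irrefl _ hA
      · exact short j i (by omega) hi hA.symm
    · rintro (rfl | rfl)
      · exact hadj i (by omega)
      · exact (hadj j (by omega)).symm
  have wadj : ∀ i, i ≤ k → (G.Adj w (u i) ↔ i = 0 ∨ i = k) := by
    intro i hi
    constructor
    · intro hA
      by_contra! hne'
      exact inner i (by omega) (by omega) hA
    · rintro (rfl | rfl) <;> assumption
  -- the induced cycle `u 0, …, u k, w`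
  refine h (k + 2) (by omega) ⟨⟨⟨fun i => if i.val ≤ k then u i.val else w, ?_⟩, ?_⟩⟩
  · intro i j hij
    dsimp only at hij
    ext
    by_cases hi : i.val ≤ k <;> by_cases hj : j.val ≤ k
    · rw [if_pos hi, if_pos hj] at hij
      by_contra hn
      rcases Nat.lt_or_gt_of_ne hn with hlt | hlt
      · exact inj _ _ hlt hj hij
      · exact inj _ _ hlt hi hij.symm
    · rw [if_pos hi, if_neg hj] at hij
      exact absurd hij (hne _ hi)
    · rw [if_neg hi, if_pos hj] at hij
      exact absurd hij.symm (hne _ hj)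
    · omega
  · intro i j
    change G.Adj (if i.val ≤ k then u i.val else w) (if j.val ≤ k then u j.val else w) ↔ _
    have hcyc : (cycleGraph (k + 2)).Adj i j ↔ i.val + 1 = j.val ∨ j.val + 1 = i.val ∨
        (i.val = 0 ∧ j.val = k + 1) ∨ (j.val = 0 ∧ i.val = k + 1) := by
      rw [cycleGraph_adj']
      have := i.isLt
      have := j.isLt
      rcases lt_trichotomy i j with hlt | rfl | hlt
      · rw [Fin.sub_val_of_le hlt.le, Fin.val_sub]
        have : i.val < j.val := hlt
        rw [Nat.mod_eq_of_lt (by omega)]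
        omega
      · rw [sub_self, Fin.val_zero]
        omega
      · rw [Fin.sub_val_of_le hlt.le, Fin.val_sub]
        have : j.val < i.val := hlt
        rw [Nat.mod_eq_of_lt (by omega)]
        omega
    rw [hcyc]
    have := i.isLt
    have := j.isLt
    by_cases hi : i.val ≤ k <;> by_cases hj : j.val ≤ k
    · rw [if_pos hi, if_pos hj, uadj _ _ hi hj]
      omega
    · rw [if_pos hi, if_neg hj, G.adj_comm, wadj _ hi]
      omega
    · rw [if_neg hi, if_pos hj, wadj _ hj]
      omega
    · rw [if_neg hi, if_neg hj]
      exact iff_of_false (G.loopless.irrefl _) (by omega)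

end

/-! ### Longest admissible paths -/

section
variable {V : Type*} {G : SimpleGraph V}

/-- `Adm G s t`: neither `s` nor `t` is a cut-vertex and every cut-vertex separates `s` from `t`.
These are the pairs that can be the ends of a Hamiltonian path. -/
def Adm (G : SimpleGraph V) (s t : V) : Prop :=
  ¬ IsCutVertex G s ∧ ¬ IsCutVertex G t ∧ ∀ w, IsCutVertex G w → ¬ RIn G {u | u ≠ w} s t

theorem Adm.symm {s t : V} (h : Adm G s t) : Adm G t s :=
  ⟨h.2.1, h.1, fun w hw h' => h.2.2 w hw h'.symm⟩

theorem Adm.of_adj {s s' t : V} (h : Adm G s t) (hs : ¬ IsCutVertex G s') (ha : G.Adj s' s) :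
    Adm G s' t := by
  refine ⟨hs, h.2.1, fun w hw h' => h.2.2 w hw (RIn.trans (RIn.of_adj ha.symm ?_ ?_) h')⟩
  · rintro rfl
    exact h.1 hw
  · rintro rfl
    exact hs hw

/-- `l` lists the vertices of a path from `s` to `t`. -/
def PathFT (G : SimpleGraph V) (s t : V) (l : List V) : Prop :=
  l.IsChain G.Adj ∧ l.Nodup ∧ l.head? = some s ∧ l.getLast? = some t

theorem PathFT.reverse {s t : V} {l : List V} (h : PathFT G s t l) : PathFT G t s l.reverse := by
  obtain ⟨h1, h2, h3, h4⟩ := h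
  refine ⟨?_, by simpa using h2, by simpa using h4, by simpa using h3⟩
  rw [List.isChain_reverse]
  exact h1.imp fun a b hab => hab.symm

theorem PathFT.left_mem {s t : V} {l : List V} (h : PathFT G s t l) : s ∈ l :=
  List.mem_of_mem_head? (by simp [h.2.2.1])

theorem PathFT.right_mem {s t : V} {l : List V} (h : PathFT G s t l) : t ∈ l :=
  List.mem_of_mem_getLast? (by simp [h.2.2.2])

theorem PathFT.adj {s t u v : V} {l : List V} (h : PathFT G s t l) (hc : [u, v] <:+: l) :
    G.Adj u v := by
  obtain ⟨A, B, rfl⟩ := hc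
  simpa using h.1.left_of_append.right_of_append

/-- Inserting a detour `c` between the consecutive vertices `u` and `v` of a path. -/
theorem PathFT.insert {s t u v : V} {l : List V} (h : PathFT G s t l) (hc : [u, v] <:+: l)
    (c : List V) (hch : (u :: (c ++ [v])).IsChain G.Adj) (hn : c.Nodup) (hd : ∀ x ∈ c, x ∉ l) :
    ∃ l', PathFT G s t l' ∧ l'.length = l.length + c.length := by
  obtain ⟨A, B, rfl⟩ := hc
  obtain ⟨h1, h2, h3, h4⟩ := h
  refine ⟨A ++ u :: (c ++ v :: B), ⟨?_, ?_, ?_, ?_⟩, ?_⟩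
  · have e1 : A ++ [u, v] ++ B = A ++ u :: v :: B := by simp
    rw [e1, List.isChain_split, List.isChain_cons_cons] at h1
    rw [List.isChain_split]
    refine ⟨h1.1, ?_⟩
    rw [← List.cons_append, List.isChain_split]
    exact ⟨hch, h1.2.2⟩
  · classical
    have hp : (A ++ u :: (c ++ v :: B)).Perm (c ++ (A ++ [u, v] ++ B)) := by
      rw [List.perm_iff_count]
      intro a
      simp only [List.count_append, List.count_cons, List.count_nil]
      omega
    rw [hp.nodup_iff, List.nodup_append']
    exact ⟨hn, h2, fun x hx hx' => hd x hx hx'⟩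
  · cases A <;> simpa using h3
  · rw [show A ++ u :: (c ++ v :: B) = (A ++ u :: c) ++ v :: B by simp, List.getLast?_append,
      ← h4, show A ++ [u, v] ++ B = (A ++ [u]) ++ v :: B by simp, List.getLast?_append]
    simp [List.getLast?_cons]
  · simp
    omega

/-- A contiguous sublist that avoids `v` lies on one side of `v`. -/
theorem segment_of_not_mem {v : V} {c A B : List V} (h : c <:+: A ++ v :: B) (hv : v ∉ c) :
    c <:+: A ∨ c <:+: B := by
  obtain ⟨C, D, h⟩ := h
  rw [List.append_eq_append_iff] at h
  rcases h with ⟨a, rfl, h⟩ | ⟨a, h, h'⟩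
  · exact Or.inl ⟨C, a, rfl⟩
  · cases a with
    | nil => exact Or.inl ⟨C, [], by simpa using h⟩
    | cons d a =>
      rw [List.cons_append, List.cons.injEq] at h'
      obtain ⟨rfl, rfl⟩ := h'
      rw [List.append_eq_append_iff] at h
      rcases h with ⟨e, rfl, h⟩ | ⟨e, rfl, h⟩
      · simp [h] at hv
      · cases e with
        | nil =>
          simp only [List.nil_append] at h
          simp [← h] at hv
        | cons d e =>
          rw [List.cons_append, List.cons.injEq] at h
          obtain ⟨rfl, rfl⟩ := h
          exact Or.inr ⟨e, D, by simp⟩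

/-- Bypassing the vertex `v` of a path when its two neighbours `p` and `q` on the path are adjacent.
Every segment of the path that avoids `v` survives. -/
theorem PathFT.bypass {s t p v q : V} {l : List V} (h : PathFT G s t l) (hc : [p, v, q] <:+: l)
    (hpq : G.Adj p q) :
    ∃ l', PathFT G s t l' ∧ l'.length + 1 = l.length ∧ (∀ y, y ∈ l' ↔ y ∈ l ∧ y ≠ v) ∧
      ∀ c, c <:+: l → v ∉ c → c <:+: l' := by
  obtain ⟨A, B, rfl⟩ := hc
  obtain ⟨h1, h2, h3, h4⟩ := h
  refine ⟨A ++ p :: q :: B, ⟨?_, ?_, ?_, ?_⟩, ?_, ?_, ?_⟩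
  · have e1 : A ++ [p, v, q] ++ B = A ++ p :: v :: q :: B := by simp
    rw [e1, List.isChain_split, List.isChain_cons_cons, List.isChain_cons_cons] at h1
    rw [List.isChain_split, List.isChain_cons_cons]
    exact ⟨h1.1, hpq, h1.2.2.2⟩
  · grind
  · cases A <;> simpa using h3
  · simpa using h4
  · simp
    omega
  · grind
  · intro c hc hv
    rcases segment_of_not_mem (A := A ++ [p]) (B := q :: B) (v := v) (by simpa using hc) hv with h | h
    · exact h.trans ⟨[], q :: B, by simp⟩
    · exact h.trans ⟨A ++ [p], [], by simp⟩

/-- `l` is a longest path from `s` to `t` among all paths with admissible ends. -/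
def Longest (G : SimpleGraph V) (s t : V) (l : List V) : Prop :=
  Adm G s t ∧ PathFT G s t l ∧
    ∀ s' t' l', Adm G s' t' → PathFT G s' t' l' → l'.length ≤ l.length

theorem Longest.reverse {s t : V} {l : List V} (h : Longest G s t l) : Longest G t s l.reverse :=
  ⟨h.1.symm, h.2.1.reverse, by simpa using h.2.2⟩
end

section
variable {V : Type*} {G : SimpleGraph V}

theorem PathFT.cons {x s t : V} {l : List V} (h : PathFT G s t l) (hx : x ∉ l) (ha : G.Adj x s) :
    PathFT G x t (x :: l) := by
  obtain ⟨h1, h2, h3, h4⟩ := h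
  refine ⟨List.isChain_cons.2 ⟨?_, h1⟩, List.nodup_cons.2 ⟨hx, h2⟩, rfl, ?_⟩
  · intro y hy
    rw [h3] at hy
    simp at hy
    exact hy ▸ ha
  · rw [List.getLast?_cons, h4]
    rfl

theorem reverse_pair {u v : V} {l : List V} (h : [u, v] <:+: l) : [v, u] <:+: l.reverse := by
  obtain ⟨A, B, rfl⟩ := h
  exact ⟨B.reverse, A.reverse, by simp⟩

/-- A vertex of a path other than its ends has a predecessor and a successor. -/
theorem PathFT.exists_triple {s t w : V} {l : List V} (h : PathFT G s t l) (hw : w ∈ l)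
    (hs : w ≠ s) (ht : w ≠ t) : ∃ p q, [p, w, q] <:+: l := by
  obtain ⟨-, -, h3, h4⟩ := h
  obtain ⟨A, B, rfl⟩ := List.append_of_mem hw
  rcases List.eq_nil_or_concat A with rfl | ⟨A, p, rfl⟩
  · simp at h3
    exact absurd h3 hs
  · cases B with
    | nil =>
      simp at h4
      exact absurd h4 ht
    | cons q B => exact ⟨p, q, A, B, by simp⟩

variable {s t : V} {l : List V}

/-- A cut-vertex separates the ends of an admissible path, hence lies on the path. -/
theorem Longest.not_cut_of_not_mem (hL : Longest G s t l) {x : V} (hx : x ∉ l) :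
    ¬ IsCutVertex G x := by
  intro hc
  refine hL.1.2.2 x hc (rIn_of_isChain hL.2.1.1 ?_ s hL.2.1.left_mem t hL.2.1.right_mem)
  rintro z hz rfl
  exact hx hz

/-- Otherwise `x` could be inserted between `u` and `v`. -/
theorem Longest.not_adj_pair (hL : Longest G s t l) {u v x : V} (hc : [u, v] <:+: l)
    (hx : x ∉ l) (hu : G.Adj x u) : ¬ G.Adj x v := by
  intro hv
  obtain ⟨l', h1, h2⟩ := hL.2.1.insert hc [x] (by simp [hu.symm, hv]) (by simp) (by simpa using hx)
  have := hL.2.2 _ _ _ hL.1 h1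
  simp at h2
  omega

/-- Otherwise the path could be extended to start at `x`, again with admissible ends. -/
theorem Longest.ne_head (hL : Longest G s t l) {w x : V} (hx : x ∉ l) (hw : G.Adj x w) :
    w ≠ s := by
  rintro rfl
  have := hL.2.2 _ _ _ (hL.1.of_adj (hL.not_cut_of_not_mem hx) hw) (hL.2.1.cons hx hw)
  simp at this

/-- A vertex `w` of a longest admissible path with a neighbour `x` off the path is an inner vertex
of it and not a cut-vertex, and its two neighbours on the path are adjacent: if not, `x` could be
inserted next to `w`, by claw-freeness at `w`. -/
theorem Longest.interior (hclaw : ClawFree G) (hL : Longest G s t l) {w x : V} (hx : x ∉ l)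
    (hw : w ∈ l) (ha : G.Adj x w) :
    ¬ IsCutVertex G w ∧ ∃ p q, [p, w, q] <:+: l ∧ G.Adj p q := by
  have hs := hL.ne_head hx ha
  have ht := hL.reverse.ne_head (by simpa using hx) ha
  obtain ⟨p, q, hpq⟩ := hL.2.1.exists_triple hw hs ht
  have hpw : [p, w] <:+: l := List.IsInfix.trans ⟨[], [q], rfl⟩ hpq
  have hwq : [w, q] <:+: l := List.IsInfix.trans ⟨[p], [], rfl⟩ hpq
  have hxq := hL.not_adj_pair hwq hx ha
  have hxp : ¬ G.Adj x p := hL.reverse.not_adj_pair (reverse_pair hpw) (by simpa using hx) ha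
  have hne : p ≠ q := by
    have := hpq.sublist.nodup hL.2.1.2.1
    simp at this
    tauto
  have hpx : p ≠ x := by
    rintro rfl
    exact hx (hpw.subset (by simp))
  have hqx : q ≠ x := by
    rintro rfl
    exact hx (hwq.subset (by simp))
  have hadj : G.Adj p q := by
    rcases hclaw.not_claw (hL.2.1.adj hpw).symm (hL.2.1.adj hwq) ha.symm hne hpx hqx with h | h | h
    · exact h
    · exact absurd h.symm hxp
    · exact absurd h.symm hxq
  refine ⟨fun hc => ?_, p, q, hpq, hadj⟩
  obtain ⟨A, B, rfl⟩ := hpq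
  have e : A ++ [p, w, q] ++ B = (A ++ [p]) ++ w :: (q :: B) := by simp
  have hP := hL.2.1
  rw [e] at hP
  obtain ⟨h1, h2, h3, h4⟩ := hP
  have hA : w ∉ A ++ [p] := by grind
  have hB : w ∉ q :: B := by grind
  have hsA : s ∈ A ++ [p] := by
    cases A <;> simp at h3 <;> simp [h3]
  have htB : t ∈ q :: B := by
    rw [List.getLast?_append, List.getLast?_cons_cons] at h4
    apply List.mem_of_getLast?
    rw [List.getLast?_cons] at h4 ⊢
    simpa using h4
  refine hL.1.2.2 w hc (((rIn_of_isChain h1.left_of_append ?_ s hsA p (by simp)).trans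
    (RIn.of_adj hadj ?_ ?_)).trans (rIn_of_isChain h1.right_of_append.tail ?_ q (by simp) t htB))
  · rintro z hz rfl
    exact hA hz
  · rintro rfl
    exact hA (by simp)
  · rintro rfl
    exact hB (by simp)
  · rintro z hz rfl
    exact hB hz

/-- If `x` off the path sees `w` and `a` on it, then `a` is not adjacent to the successor `q`
of `w`: otherwise bypass `a` and insert `x, a` between `w` and `q`. -/
theorem Longest.not_adj_succ (hclaw : ClawFree G) (hL : Longest G s t l) {w a x q : V}
    (hx : x ∉ l) (ha : a ∈ l) (hwq : [w, q] <:+: l) (hxw : G.Adj x w) (hxa : G.Adj x a)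
    (hne : a ≠ w) : ¬ G.Adj a q := by
  intro haq
  obtain ⟨-, p', q', htr, hadj⟩ := hL.interior hclaw hx ha hxa
  obtain ⟨l', h1, h2, h3, h4⟩ := hL.2.1.bypass htr hadj
  obtain ⟨l'', h5, h6⟩ := h1.insert (h4 _ hwq (by simp [hne, haq.ne])) [x, a]
    (by simp [hxw.symm, hxa, haq]) (by simp [hxa.ne]) (by simp [h3, hx])
  have := hL.2.2 _ _ _ hL.1 h5
  simp at h6
  omega

theorem Longest.not_adj_pred (hclaw : ClawFree G) (hL : Longest G s t l) {w a x q : V}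
    (hx : x ∉ l) (ha : a ∈ l) (hwq : [q, w] <:+: l) (hxw : G.Adj x w) (hxa : G.Adj x a)
    (hne : a ≠ w) : ¬ G.Adj a q :=
  hL.reverse.not_adj_succ hclaw (by simpa using hx) (by simpa using ha) (reverse_pair hwq)
    hxw hxa hne

end

section
variable {V : Type*} {G : SimpleGraph V} {s t : V} {l : List V}

theorem succ_unique {l : List V} (hl : l.Nodup) {u v v' : V} (h : [u, v] <:+: l)
    (h' : [u, v'] <:+: l) : v = v' := by
  obtain ⟨A, B, rfl⟩ := h
  obtain ⟨C, D, h'⟩ := h'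
  have e : A ++ u :: (v :: B) = C ++ u :: (v' :: D) := by simpa using h'.symm
  have h1 : u ∉ A := by
    intro hu
    simp [List.nodup_append] at hl
    exact (hl.2.2 u hu).1 rfl
  have h2 : u ∉ v :: B := by
    intro hu
    simp only [List.append_assoc, List.cons_append, List.nil_append] at hl
    exact (List.nodup_cons.1 (List.nodup_append'.1 hl).2.1).1 hu
  have := ((List.append_cons_inj_of_notMem h1 h2).1 e).2.2
  simp at this
  exact this.1

theorem pred_unique {l : List V} (hl : l.Nodup) {u v v' : V} (h : [v, u] <:+: l)
    (h' : [v', u] <:+: l) : v = v' :=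
  succ_unique (List.nodup_reverse.2 hl) (reverse_pair h) (reverse_pair h')

theorem PathFT.bypass_two {v p q v' p' q' : V} (h : PathFT G s t l)
    (hc : [p, v, q] <:+: l) (hpq : G.Adj p q) (hc' : [p', v', q'] <:+: l) (hpq' : G.Adj p' q')
    (hv : v ∉ [p', v', q']) :
    ∃ l', PathFT G s t l' ∧ l'.length + 2 = l.length ∧
      (∀ y, y ∈ l' ↔ y ∈ l ∧ y ≠ v ∧ y ≠ v') ∧ ∀ c, c <:+: l → v ∉ c → v' ∉ c → c <:+: l' := by
  obtain ⟨l₁, h1, h2, h3, h4⟩ := h.bypass hc hpq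
  obtain ⟨l₂, h5, h6, h7, h8⟩ := h1.bypass (h4 _ hc' hv) hpq'
  refine ⟨l₂, h5, by omega, fun y => ?_, fun c h h' h'' => h8 c (h4 c h h') h''⟩
  rw [h7, h3, and_assoc]

/-- The Oberly–Sumner exchange argument: in a claw-free chordal graph no vertex off a longest
admissible path has a neighbour on it, since otherwise the path could be rerouted to a longer one. -/
theorem Longest.not_adj (hclaw : ClawFree G) (hchord : Chordal G) (hL : Longest G s t l)
    {w x : V} (hx : x ∉ l) (hw : w ∈ l) : ¬ G.Adj x w := by
  intro hxw
  have hP := hL.2.1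
  obtain ⟨hcut, p, q, htr, hpq⟩ := hL.interior hclaw hx hw hxw
  have hpw : [p, w] <:+: l := List.IsInfix.trans ⟨[], [q], rfl⟩ htr
  have hwq : [w, q] <:+: l := List.IsInfix.trans ⟨[p], [], rfl⟩ htr
  have pair : ∀ {u v z : V}, [u, v] <:+: l → z ∉ l → G.Adj z u → ¬ G.Adj z v :=
    fun h1 h2 => hL.not_adj_pair h1 h2
  have pair' : ∀ {u v z : V}, [v, u] <:+: l → z ∉ l → G.Adj z u → ¬ G.Adj z v :=
    fun h1 h2 => hL.reverse.not_adj_pair (reverse_pair h1) (by simpa using h2)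
  have hql : q ∈ l := hwq.subset (by simp)
  have hpl : p ∈ l := hpw.subset (by simp)
  have hxq := pair hwq hx hxw
  have hxp := pair' hpw hx hxw
  have awp := hP.adj hpw
  have awq := hP.adj hwq
  have ne_of : ∀ {z : V}, z ∈ l → x ≠ z := by
    rintro z hz rfl
    exact hx hz
  -- an edge `a b` inside `N(w)` from the closed neighbourhood of `x` to its complement
  obtain ⟨a, b, hwa, hwb, hXa, hXb, hab⟩ := hchord.exists_crossing hcut hxw.symm awq
    (fun v => v = x ∨ G.Adj x v) (Or.inl rfl) (by
      rintro (h | h)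
      · exact ne_of hql h.symm
      · exact hxq h)
  push Not at hXb
  obtain ⟨hbx, hxb⟩ := hXb
  have hxa : G.Adj x a := by
    rcases hXa with rfl | h
    · exact absurd hab hxb
    · exact h
  have hbq : b = q ∨ G.Adj b q := by
    by_contra! hc
    rcases hclaw.not_claw hxw.symm hwb awq hbx.symm (ne_of hql) hc.1 with h | h | h
    · exact hxb h
    · exact hxq h
    · exact hc.2 h
  have hbp : b = p ∨ G.Adj b p := by
    by_contra! hc
    rcases hclaw.not_claw hxw.symm hwb awp.symm hbx.symm (ne_of hpl) hc.1 with h | h | h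
    · exact hxb h
    · exact hxp h
    · exact hc.2 h
  have hbl : b ∈ l := by
    by_contra hbl
    rcases hbq with rfl | h
    · exact hbl hql
    · exact pair hwq hbl hwb.symm h
  have hal : a ∈ l := by
    by_contra hal
    rcases hbq with rfl | h
    · exact pair hwq hal hwa.symm hab
    · exact hL.not_adj_succ hclaw hal hbl hwq hwa.symm hab hwb.ne' h
  have haq := hL.not_adj_succ hclaw hx hal hwq hxw hxa hwa.ne'
  have hap := hL.not_adj_pred hclaw hx hal hpw hxw hxa hwa.ne'
  have hbq' : b ≠ q := by
    rintro rfl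
    exact haq hab
  have hbp' : b ≠ p := by
    rintro rfl
    exact hap hab
  replace hbq := hbq.resolve_left hbq'
  replace hbp := hbp.resolve_left hbp'
  obtain ⟨-, p', q', htr', hpq'⟩ := hL.interior hclaw hx hal hxa
  have hpa : [p', a] <:+: l := List.IsInfix.trans ⟨[], [q'], rfl⟩ htr'
  have haq' : [a, q'] <:+: l := List.IsInfix.trans ⟨[p'], [], rfl⟩ htr'
  have hbq'' : b ≠ q' := by
    rintro rfl
    exact hL.not_adj_succ hclaw hx hw haq' hxa hxw hwa.ne hwb
  have hbp'' : b ≠ p' := by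
    rintro rfl
    exact hL.not_adj_pred hclaw hx hw hpa hxa hxw hwa.ne hwb
  have hwp' : w ≠ p' := by
    rintro rfl
    exact pair hpa hx hxw hxa
  have hwq' : w ≠ q' := by
    rintro rfl
    exact pair' haq' hx hxw hxa
  have hap' : a ≠ p := by
    rintro rfl
    exact hxp hxa
  have haq'' : a ≠ q := by
    rintro rfl
    exact hxq hxa
  have hbw := hwb.ne'
  have haw := hwa.ne'
  have hbs := hab.ne
  obtain ⟨l₂, hP₂, hlen, hmem, hinf⟩ :=
    hP.bypass_two htr hpq htr' hpq' (by simp [hwp', hwq', haw.symm])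
  by_cases hs : b = s
  · -- the new start `w, x, a` followed by the rest of the path
    subst hs
    have h3 : PathFT G w t (w :: x :: a :: l₂) := by
      refine ((hP₂.cons ?_ hab).cons ?_ hxa).cons ?_ hxw.symm
      · simp [hmem]
      · simp [hmem, hxa.ne, hx]
      · simp [hmem, hxw.ne', haw.symm]
    have := hL.2.2 _ _ _ (hL.1.of_adj hcut hwb) h3
    simp at this
    omega
  by_cases ht : b = t
  · subst ht
    have h3 : PathFT G w s (w :: x :: a :: l₂.reverse) := by
      refine ((hP₂.reverse.cons ?_ hab).cons ?_ hxa).cons ?_ hxw.symm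
      · simp [hmem]
      · simp [hmem, hxa.ne, hx]
      · simp [hmem, hxw.ne', haw.symm]
    have := hL.2.2 _ _ _ (hL.1.symm.of_adj hcut hwb) h3
    simp at this
    omega
  obtain ⟨r, r', htrb⟩ := hP.exists_triple hbl hs ht
  have hrb : [r, b] <:+: l := List.IsInfix.trans ⟨[], [r'], rfl⟩ htrb
  have hbr : [b, r'] <:+: l := List.IsInfix.trans ⟨[r], [], rfl⟩ htrb
  have hn := hP.2.1
  have hrw : r ≠ w := by
    rintro rfl
    exact hbq' (succ_unique hn hrb hwq)
  have hrw' : r' ≠ w := by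
    rintro rfl
    exact hbp' (pred_unique hn hbr hpw)
  have hra : r ≠ a := by
    rintro rfl
    exact hbq'' (succ_unique hn hrb haq')
  have hra' : r' ≠ a := by
    rintro rfl
    exact hbp'' (pred_unique hn hbr hpa)
  have hrr : r ≠ r' := by
    have := htrb.sublist.nodup hn
    simp at this
    tauto
  have hax : a ≠ x := hxa.ne'
  have hwx : w ≠ x := hxw.ne'
  rcases hclaw.not_claw (hP.adj hrb).symm (hP.adj hbr) hwb.symm hrr hrw hrw' with h | h | h
  · -- bypass `a` and `b`, insert `x, a, b` between `w` and `q`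
    obtain ⟨l₃, hP₃, hlen₃, hmem₃, hinf₃⟩ :=
      hP.bypass_two htrb h htr' hpq' (by simp [hbp'', hbq'', hab.ne'])
    obtain ⟨l₄, hP₄, hlen₄⟩ := hP₃.insert
      (hinf₃ _ hwq (by simp [hbw, hbq']) (by simp [haw, haq''])) [x, a, b]
      (by simp [hxw.symm, hxa, hab, hbq]) (by simp [hax.symm, hbx.symm, hab.ne])
      (by simp [hmem₃, hx])
    have := hL.2.2 _ _ _ hL.1 hP₄
    simp at hlen₄
    omega
  · -- bypass `w` and `a`, insert `w, x, a` between the predecessor of `b` and `b`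
    obtain ⟨l₄, hP₄, hlen₄⟩ := hP₂.insert
      (hinf _ hrb (by simp [hrw.symm, hbw.symm]) (by simp [hra.symm, hab.ne])) [w, x, a]
      (by simp [h, hxw.symm, hxa, hab]) (by simp [hax.symm, hwx, haw.symm])
      (by simp [hmem, hx])
    have := hL.2.2 _ _ _ hL.1 hP₄
    simp at hlen₄
    omega
  · obtain ⟨l₄, hP₄, hlen₄⟩ := hP₂.insert
      (hinf _ hbr (by simp [hrw'.symm, hbw.symm]) (by simp [hra'.symm, hab.ne])) [a, x, w]
      (by simp [h.symm, hxw, hxa.symm, hab.symm]) (by simp [hax, hwx.symm, haw])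
      (by simp [hmem, hx])
    have := hL.2.2 _ _ _ hL.1 hP₄
    simp at hlen₄
    omega

/-- A longest path with admissible ends is Hamiltonian: by `Longest.not_adj` no edge leaves it. -/
theorem exists_isHamiltonian_of_adm [Finite V] [DecidableEq V] (hconn : G.Connected)
    (hclaw : ClawFree G) (hchord : Chordal G) (h : Adm G s t) :
    ∃ (a b : V) (p : G.Walk a b), p.IsHamiltonian := by
  have := Fintype.ofFinite V
  let Q : ℕ → Prop := fun n => ∃ s t l, Adm G s t ∧ PathFT G s t l ∧ l.length = n
  have hbd : ∀ n, Q n → n ≤ Fintype.card V := by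
    rintro n ⟨s, t, l, -, hP, rfl⟩
    exact hP.2.1.length_le_card
  obtain ⟨p, hp⟩ := hconn.exists_isPath s t
  have hQ : Q p.support.length := by
    refine ⟨s, t, p.support, h, ⟨p.isChain_adj_support, hp.support_nodup, ?_, ?_⟩, rfl⟩
    · rw [List.head?_eq_some_head p.support_ne_nil, p.head_support]
    · rw [List.getLast?_eq_some_getLast p.support_ne_nil, p.getLast_support]
  classical
  obtain ⟨s', t', l, hA, hP, hl⟩ := Nat.findGreatest_spec (hbd _ hQ) hQ
  have hL : Longest G s' t' l := ⟨hA, hP, fun s'' t'' l' h1 h2 => by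
    rw [hl]
    exact Nat.le_findGreatest (hbd _ ⟨s'', t'', l', h1, h2, rfl⟩) ⟨s'', t'', l', h1, h2, rfl⟩⟩
  have hall : ∀ z, z ∈ l := by
    intro z
    obtain ⟨r, -⟩ := hconn.exists_isPath s' z
    refine RIn.induct (S := Set.univ) ⟨r, fun _ _ => trivial⟩ (· ∈ l) hP.left_mem ?_
    intro u v _ _ huv hu
    by_contra hv
    exact hL.not_adj hclaw hchord hv hu huv.symm
  have hne : l ≠ [] := List.ne_nil_of_mem hP.left_mem
  refine ⟨_, _, Walk.ofSupport l hne hP.1, fun z => ?_⟩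
  rw [Walk.support_ofSupport]
  exact List.count_eq_one_of_mem hP.2.1 (hall z)

end

/-! ### Blocks -/

section
variable {V : Type*} {G : SimpleGraph V}

/-- `C` induces a connected subgraph without a cut-vertex of its own. Blocks are the maximal
such sets. Deleting a vertex `w` outside `C` is allowed here, and has no effect. -/
def NoCut (G : SimpleGraph V) (C : Set V) : Prop :=
  C.Nonempty ∧ (∀ x ∈ C, ∀ y ∈ C, RIn G C x y) ∧
    ∀ w, ∀ x ∈ C \ {w}, ∀ y ∈ C \ {w}, RIn G (C \ {w}) x y

theorem noCut_iff {C : Set V} :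
    NoCut G C ↔ (G.induce C).Connected ∧ ∀ v ∈ C, (G.induce (C \ {v})).Preconnected := by
  rw [induce_connected_iff, NoCut, and_assoc]
  refine and_congr_right fun _ => and_congr_right fun h => ?_
  constructor
  · exact fun h' v _ => induce_preconnected_iff.2 (h' v)
  · intro h' w
    by_cases hw : w ∈ C
    · exact induce_preconnected_iff.1 (h' w hw)
    · rwa [Set.sdiff_singleton_eq_self hw]

theorem isBlock_iff {B : Set V} :
    IsBlock G B ↔ NoCut G B ∧ ∀ B', B ⊆ B' → NoCut G B' → B = B' := by
  simp only [noCut_iff, IsBlock, and_assoc, and_imp]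

theorem NoCut.exists_isBlock [Finite V] {C : Set V} (h : NoCut G C) :
    ∃ B, IsBlock G B ∧ C ⊆ B := by
  obtain ⟨B, hCB, hB⟩ := (Set.toFinite {C | NoCut G C}).exists_le_maximal h
  exact ⟨B, isBlock_iff.2 ⟨hB.prop, fun B' h1 h2 => hB.eq_of_subset h2 h1⟩, hCB⟩

theorem noCut_pair {x y : V} (h : G.Adj x y) : NoCut G {x, y} := by
  have key : ∀ S : Set V, S ⊆ {x, y} → ∀ a ∈ S, ∀ b ∈ S, RIn G S a b := by
    intro S hS a ha b hb
    rcases hS ha with rfl | rfl <;> rcases hS hb with rfl | rfl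
    · exact RIn.refl ha
    · exact RIn.of_adj h ha hb
    · exact RIn.of_adj h.symm ha hb
    · exact RIn.refl ha
  exact ⟨⟨x, by simp⟩, key _ subset_rfl, fun w => key _ Set.sdiff_subset⟩

theorem exists_isBlock_of_adj [Finite V] {x y : V} (h : G.Adj x y) :
    ∃ B, IsBlock G B ∧ x ∈ B ∧ y ∈ B := by
  obtain ⟨B, hB, hs⟩ := (noCut_pair h).exists_isBlock
  exact ⟨B, hB, hs (by simp), hs (by simp)⟩

theorem IsBlock.rIn {B : Set V} (h : IsBlock G B) {w x y : V} (hx : x ∈ B) (hy : y ∈ B)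
    (hxw : x ≠ w) (hyw : y ≠ w) : RIn G {u | u ≠ w} x y :=
  ((isBlock_iff.1 h).1.2.2 w x ⟨hx, hxw⟩ y ⟨hy, hyw⟩).mono fun _ hu => hu.2

/-- Two distinct blocks meet only in cut-vertices: a path avoiding a common vertex `z` that is
not a cut-vertex would merge both blocks into a larger set without cut-vertices. -/
theorem IsBlock.isCutVertex {B B' : Set V} (h : IsBlock G B) (h' : IsBlock G B') (hne : B ≠ B')
    {z : V} (hz : z ∈ B) (hz' : z ∈ B') : IsCutVertex G z := by
  classical
  by_contra hcut
  rw [isBlock_iff] at h h'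
  have hs : ¬ B ⊆ B' := fun hs => hne (h.2 _ hs h'.1)
  have hs' : ¬ B' ⊆ B := fun hs => hne (h'.2 _ hs h.1).symm
  obtain ⟨x, hx, hxB'⟩ := Set.not_subset.1 hs
  obtain ⟨y, hy, hyB⟩ := Set.not_subset.1 hs'
  have hxz : x ≠ z := by
    rintro rfl
    exact hxB' hz'
  have hyz : y ≠ z := by
    rintro rfl
    exact hyB hz
  obtain ⟨p, hp, hpz⟩ : ∃ p : G.Walk x y, p.IsPath ∧ ∀ u ∈ p.support, u ≠ z := by
    obtain ⟨p, hp⟩ := not_isCutVertex_iff.1 hcut x y hxz hyz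
    exact ⟨p.bypass, p.bypass_isPath, fun u hu => hp u (p.support_bypass_subset_support hu)⟩
  let C : Set V := B ∪ B' ∪ {u | u ∈ p.support}
  have sB : ∀ w, B \ {w} ⊆ C \ {w} := fun w =>
    Set.sdiff_subset_sdiff_left fun u hu => Or.inl (Or.inl hu)
  have sB' : ∀ w, B' \ {w} ⊆ C \ {w} :=
    fun w => Set.sdiff_subset_sdiff_left fun u hu => Or.inl (Or.inr hu)
  -- connection to a common vertex `c` suffices
  have hub : ∀ {S : Set V} (c : V), (∀ a ∈ S, RIn G S a c) → ∀ a ∈ S, ∀ b ∈ S, RIn G S a b :=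
    fun c hc a ha b hb => (hc a ha).trans (hc b hb).symm
  have hC : NoCut G C := by
    have hpx : ∀ q ∈ p.support, RIn G {u | u ∈ p.support} q x := fun q hq =>
      RIn.symm ⟨p.takeUntil q hq, fun u hu => p.support_takeUntil_subset_support hq hu⟩
    refine ⟨⟨z, Or.inl (Or.inl hz)⟩, hub z ?_, fun w => ?_⟩
    · rintro a ((ha | ha) | ha)
      · exact (h.1.2.1 a ha z hz).mono fun u hu => Or.inl (Or.inl hu)
      · exact (h'.1.2.1 a ha z hz').mono fun u hu => Or.inl (Or.inr hu)
      · exact ((hpx a ha).mono fun u hu => Or.inr hu).trans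
          ((h.1.2.1 x hx z hz).mono fun u hu => Or.inl (Or.inl hu))
    by_cases hwz : w = z
    · subst hwz
      have sp : {u | u ∈ p.support} ⊆ C \ {w} := fun u hu => ⟨Or.inr hu, hpz u hu⟩
      refine hub x ?_
      rintro a ⟨(ha | ha) | ha, haw⟩
      · exact (h.1.2.2 w a ⟨ha, haw⟩ x ⟨hx, hxz⟩).mono (sB w)
      · exact ((h'.1.2.2 w a ⟨ha, haw⟩ y ⟨hy, hyz⟩).mono (sB' w)).trans
          ((hpx y p.end_mem_support).mono sp)
      · exact (hpx a ha).mono sp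
    · have hzw : z ≠ w := Ne.symm hwz
      refine hub z ?_
      rintro a ⟨(ha | ha) | ha, haw⟩
      · exact (h.1.2.2 w a ⟨ha, haw⟩ z ⟨hz, hzw⟩).mono (sB w)
      · exact (h'.1.2.2 w a ⟨ha, haw⟩ z ⟨hz', hzw⟩).mono (sB' w)
      · -- one of the two parts of the path cut at `a` avoids `w`
        have hsplit : w ∉ (p.takeUntil a ha).support ∨ w ∉ (p.dropUntil a ha).support := by
          by_contra! hc
          have hn := hp.support_nodup
          rw [← p.take_spec ha, Walk.support_append, List.nodup_append'] at hn
          refine hn.2.2 hc.1 ?_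
          have := hc.2
          rw [← Walk.cons_tail_support, List.mem_cons] at this
          exact this.resolve_left fun e => haw e.symm
        rcases hsplit with hw | hw
        · have hax : RIn G (C \ {w}) a x := RIn.symm ⟨p.takeUntil a ha, fun u hu =>
            ⟨Or.inr (p.support_takeUntil_subset_support ha hu), fun e => hw (e ▸ hu)⟩⟩
          exact hax.trans ((h.1.2.2 w x ⟨hx, hax.right_mem.2⟩ z ⟨hz, hzw⟩).mono (sB w))
        · have hay : RIn G (C \ {w}) a y := ⟨p.dropUntil a ha, fun u hu =>
            ⟨Or.inr (p.support_dropUntil_subset_support ha hu), fun e => hw (e ▸ hu)⟩⟩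
          exact hay.trans ((h'.1.2.2 w y ⟨hy, hay.right_mem.2⟩ z ⟨hz', hzw⟩).mono (sB' w))
  have e : B = C := h.2 C (fun u hu => Or.inl (Or.inl hu)) hC
  exact hyB (e ▸ Or.inl (Or.inr hy))

theorem exists_adj_rIn (hconn : G.Connected) {x w : V} (hxw : x ≠ w) :
    ∃ x', G.Adj w x' ∧ RIn G {u | u ≠ w} x x' := by
  obtain ⟨p, -⟩ := hconn.exists_isPath x w
  have := RIn.induct (S := Set.univ) ⟨p, fun _ _ => trivial⟩
    (fun v => (v ≠ w ∧ RIn G {u | u ≠ w} x v) ∨ ∃ x', G.Adj w x' ∧ RIn G {u | u ≠ w} x x')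
    (Or.inl ⟨hxw, RIn.refl hxw⟩) (by
      rintro a b - - hab (⟨ha, h⟩ | h)
      · by_cases hb : b = w
        · subst hb
          exact Or.inr ⟨a, hab.symm, h⟩
        · exact Or.inl ⟨hb, h.trans (RIn.of_adj hab ha hb)⟩
      · exact Or.inr h)
  exact this.resolve_left fun h => h.1 rfl

theorem IsCutVertex.exists_two_blocks [Finite V] (hconn : G.Connected) {w : V}
    (hw : IsCutVertex G w) : ∃ B B', IsBlock G B ∧ IsBlock G B' ∧ B ≠ B' ∧ w ∈ B ∧ w ∈ B' := by
  obtain ⟨x, y, hx, hy, h⟩ := isCutVertex_iff.1 hw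
  obtain ⟨x', hwx, hxx⟩ := exists_adj_rIn hconn hx
  obtain ⟨y', hwy, hyy⟩ := exists_adj_rIn hconn hy
  obtain ⟨B, hB, hwB, hxB⟩ := exists_isBlock_of_adj hwx
  obtain ⟨B', hB', hwB', hyB'⟩ := exists_isBlock_of_adj hwy
  refine ⟨B, B', hB, hB', ?_, hwB, hwB'⟩
  rintro rfl
  exact h ((hxx.trans (hB.rIn hxB hyB' hwx.ne' hwy.ne')).trans hyy.symm)

/-! ### A path-shaped block-cutpoint tree yields admissible ends -/

theorem bcGraph_adj_inl_inr {c : {v : V // IsCutVertex G v}} {B : {B : Set V // IsBlock G B}} :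
    (bcGraph G).Adj (Sum.inl c) (Sum.inr B) ↔ (c : V) ∈ (B : Set V) := by
  refine (fromRel_adj _ _ _).trans ?_
  constructor
  · rintro ⟨-, ⟨c', B', h1, h2, h3⟩ | ⟨c', B', h1, h2, h3⟩⟩
    · cases h1
      cases h2
      exact h3
    · cases h1
  · exact fun h => ⟨Sum.inl_ne_inr, Or.inl ⟨c, B, rfl, rfl, h⟩⟩

theorem not_bcGraph_adj_inl_inl {c c' : {v : V // IsCutVertex G v}} :
    ¬ (bcGraph G).Adj (Sum.inl c) (Sum.inl c') := fun h =>
  ((fromRel_adj _ _ _).1 h).2.elim (fun ⟨_, _, _, h2, _⟩ => by cases h2)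
    (fun ⟨_, _, _, h2, _⟩ => by cases h2)

theorem not_bcGraph_adj_inr_inr {B B' : {B : Set V // IsBlock G B}} :
    ¬ (bcGraph G).Adj (Sum.inr B) (Sum.inr B') := fun h =>
  ((fromRel_adj _ _ _).1 h).2.elim (fun ⟨_, _, h1, _, _⟩ => by cases h1)
    (fun ⟨_, _, h1, _, _⟩ => by cases h1)

/-- The first node of a path-shaped block-cutpoint tree is a block that contains a vertex which is
not a cut-vertex: it is adjacent to at most one cut-vertex, while every cut-vertex
lies in two blocks. -/
theorem exists_end [Finite V] (hconn : G.Connected) {n : ℕ} {f : Fin (n + 1) → BCVert G}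
    (hsurj : Function.Surjective f)
    (hadj : ∀ i j, (bcGraph G).Adj (f i) (f j) ↔ (i.val + 1 = j.val ∨ j.val + 1 = i.val)) :
    ∃ B s, f 0 = Sum.inr B ∧ s ∈ B.1 ∧ ¬ IsCutVertex G s := by
  have nb : ∀ i j, (bcGraph G).Adj (f 0) (f i) → (bcGraph G).Adj (f 0) (f j) → i = j := by
    intro i j hi hj
    rw [hadj] at hi hj
    simp only [Fin.val_zero] at hi hj
    ext
    omega
  rcases h0 : f 0 with w | B
  · exfalso
    obtain ⟨B, B', hB, hB', hne, hw, hw'⟩ := w.2.exists_two_blocks hconn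
    obtain ⟨i, hi⟩ := hsurj (Sum.inr ⟨B, hB⟩)
    obtain ⟨j, hj⟩ := hsurj (Sum.inr ⟨B', hB'⟩)
    have := nb i j (by rw [h0, hi]; exact bcGraph_adj_inl_inr.2 hw)
      (by rw [h0, hj]; exact bcGraph_adj_inl_inr.2 hw')
    subst this
    rw [hi] at hj
    cases hj
    exact hne rfl
  · by_contra! hc
    replace hc : ∀ s ∈ B.1, IsCutVertex G s := fun s hs => hc B s rfl hs
    have hB := isBlock_iff.1 B.2
    obtain ⟨c, hcB⟩ := hB.1.1
    have hsub : B.1 ⊆ {c} := by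
      intro s hs
      obtain ⟨i, hi⟩ := hsurj (Sum.inl ⟨s, hc s hs⟩)
      obtain ⟨j, hj⟩ := hsurj (Sum.inl ⟨c, hc c hcB⟩)
      have := nb i j (by rw [h0, hi]; exact (bcGraph_adj_inl_inr.2 hs).symm)
        (by rw [h0, hj]; exact (bcGraph_adj_inl_inr.2 hcB).symm)
      subst this
      rw [hi] at hj
      cases hj
      rfl
    obtain ⟨B₁, B₂, h1, h2, hne, hc1, hc2⟩ := (hc c hcB).exists_two_blocks hconn
    have e1 := hB.2 B₁ (hsub.trans (by simpa using hc1)) (isBlock_iff.1 h1).1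
    have e2 := hB.2 B₂ (hsub.trans (by simpa using hc2)) (isBlock_iff.1 h2).1
    exact hne (e1.symm.trans e2)

/-- If the block-cutpoint tree is a path, vertices `s` and `t` of its two end blocks that are not
cut-vertices are separated by every cut-vertex `w`: the blocks before `w` and the blocks
after `w` share no vertex other than `w`. -/
theorem exists_adm_of_inducesPath [Finite V] (hconn : G.Connected)
    (h : InducesPath (bcGraph G) (Set.univ : Set (BCVert G))) : ∃ s t, Adm G s t := by
  obtain ⟨n, f, hinj, hrange, hadj⟩ := h
  have hsurj := Set.range_eq_univ.1 hrange
  obtain ⟨B, s, h0, hs, hcs⟩ := exists_end hconn hsurj hadj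
  obtain ⟨B', t, h1, ht, hct⟩ := exists_end (f := f ∘ Fin.rev) hconn
    (hsurj.comp Fin.rev_surjective) (by
      intro i j
      rw [Function.comp, Function.comp, hadj, Fin.val_rev, Fin.val_rev]
      omega)
  rw [Function.comp, Fin.rev_zero] at h1
  refine ⟨s, t, hcs, hct, fun w hw hst => ?_⟩
  obtain ⟨i, hi⟩ := hsurj (Sum.inl ⟨w, hw⟩)
  -- blocks sharing a vertex other than `w` lie on the same side of `w`
  have side : ∀ x, x ≠ w → ∀ j B j' B', f j = Sum.inr B → f j' = Sum.inr B' → x ∈ B.1 →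
      x ∈ B'.1 → j < i → j' < i := by
    intro x hx j B j' B' hj hj' hxB hxB' hji
    by_cases hBB : B = B'
    · subst hBB
      rwa [← hinj (hj.trans hj'.symm)]
    have hcx := B.2.isCutVertex B'.2 (fun e => hBB (Subtype.ext e)) hxB hxB'
    obtain ⟨k, hk⟩ := hsurj (Sum.inl ⟨x, hcx⟩)
    have h1 := (hadj k j).1 (by rw [hk, hj]; exact bcGraph_adj_inl_inr.2 hxB)
    have h2 := (hadj k j').1 (by rw [hk, hj']; exact bcGraph_adj_inl_inr.2 hxB')
    have hki : k.val ≠ i.val := by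
      intro e
      rw [Fin.ext e, hi] at hk
      cases hk
      exact hx rfl
    have hji' : j'.val ≠ i.val := by
      intro e
      rw [Fin.ext e, hi] at hj'
      cases hj'
    rw [Fin.lt_def] at hji ⊢
    omega
  have hL := hst.induct (fun x => ∃ j B, j < i ∧ f j = Sum.inr B ∧ x ∈ B.1) (by
      refine ⟨0, B, Fin.pos_of_ne_zero ?_, h0, hs⟩
      rintro rfl
      rw [hi] at h0
      cases h0) (by
    rintro a b ha hb hab ⟨j, B₁, hji, hj, haB⟩
    obtain ⟨B₂, hB₂, ha2, hb2⟩ := exists_isBlock_of_adj hab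
    obtain ⟨j', hj'⟩ := hsurj (Sum.inr ⟨B₂, hB₂⟩)
    exact ⟨j', ⟨B₂, hB₂⟩, side a ha _ _ _ _ hj hj' haB ha2 hji, hj', hb2⟩)
  obtain ⟨j, B₁, hji, hj, htB⟩ := hL
  have := side t hst.right_mem _ _ _ _ hj h1 htB ht hji
  exact absurd this (Fin.le_last i).not_gt

end

/-! ### Blocks of a traceable graph -/

section
variable {V : Type*} {G : SimpleGraph V}

/-- The vertices `v a, …, v b` of an enumeration `v`. -/
def Seg_s17 (v : ℕ → V) (a b : ℕ) : Set V := {x | ∃ i, a ≤ i ∧ i ≤ b ∧ x = v i}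

theorem Seg_s17.mono {v : ℕ → V} {a b a' b' : ℕ} (ha : a' ≤ a) (hb : b ≤ b') :
    Seg_s17 v a b ⊆ Seg_s17 v a' b' := fun _ ⟨i, h1, h2, h3⟩ => ⟨i, ha.trans h1, h2.trans hb, h3⟩

/-- `v 0, …, v m` is a Hamiltonian path of `G`. -/
structure HamEnum (G : SimpleGraph V) (m : ℕ) (v : ℕ → V) : Prop where
  inj : ∀ i j, i ≤ m → j ≤ m → v i = v j → i = j
  surj : ∀ x, ∃ i ≤ m, x = v i
  adj : ∀ i < m, G.Adj (v i) (v (i + 1))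

namespace HamEnum

variable {m : ℕ} {v : ℕ → V}

theorem mem_seg (h : HamEnum G m v) {a b i : ℕ} (hb : b ≤ m) (hi : i ≤ m) :
    v i ∈ Seg_s17 v a b ↔ a ≤ i ∧ i ≤ b := by
  constructor
  · rintro ⟨j, h1, h2, h3⟩
    rw [h.inj i j hi (h2.trans hb) h3]
    exact ⟨h1, h2⟩
  · exact fun ⟨h1, h2⟩ => ⟨i, h1, h2, rfl⟩

theorem rIn_seg (h : HamEnum G m v) {a b : ℕ} (hab : a ≤ b) (hb : b ≤ m) :
    RIn G (Seg_s17 v a b) (v a) (v b) := by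
  induction b, hab using Nat.le_induction with
  | base => exact RIn.refl ⟨a, le_rfl, le_rfl, rfl⟩
  | succ b hab ih =>
    exact ((ih (by omega)).mono (Seg_s17.mono le_rfl (by omega))).trans
      (RIn.of_adj (h.adj b (by omega)) ⟨b, hab, by omega, rfl⟩ ⟨b + 1, by omega, le_rfl, rfl⟩)

/-- A segment of a Hamiltonian path stays connected after the deletion of a vertex `v i`, as soon
as some edge of the segment jumps over `v i` when `v i` is in its interior. -/
theorem rIn_seg_diff (h : HamEnum G m v) {a b i : ℕ} (hb : b ≤ m) (hi : i ≤ m)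
    (hj : a < i → i < b → ∃ a' b', a ≤ a' ∧ a' < i ∧ i < b' ∧ b' ≤ b ∧ G.Adj (v a') (v b')) :
    ∀ x ∈ Seg_s17 v a b \ {v i}, ∀ y ∈ Seg_s17 v a b \ {v i}, RIn G (Seg_s17 v a b \ {v i}) x y := by
  have low : ∀ j k, a ≤ j → j ≤ k → k ≤ b → (k < i ∨ i < j) →
      RIn G (Seg_s17 v a b \ {v i}) (v j) (v k) := by
    intro j k h1 h2 h3 h4
    refine (h.rIn_seg h2 (h3.trans hb)).mono ?_
    rintro x ⟨l, h5, h6, rfl⟩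
    refine ⟨⟨l, by omega, by omega, rfl⟩, fun e => ?_⟩
    have := h.inj l i (by omega) hi e
    omega
  have key : ∀ j k, a ≤ j → j ≤ k → k ≤ b → j ≠ i → k ≠ i →
      RIn G (Seg_s17 v a b \ {v i}) (v j) (v k) := by
    intro j k h1 h2 h3 h4 h5
    by_cases h6 : k < i ∨ i < j
    · exact low j k h1 h2 h3 h6
    obtain ⟨a', b', h7, h8, h9, h10, h11⟩ := hj (by omega) (by omega)
    have e1 : RIn G (Seg_s17 v a b \ {v i}) (v j) (v a') := by
      rcases le_total j a' with h | h
      · exact low _ _ h1 h (by omega) (by omega)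
      · exact (low _ _ h7 h (by omega) (by omega)).symm
    have e2 : RIn G (Seg_s17 v a b \ {v i}) (v b') (v k) := by
      rcases le_total b' k with h | h
      · exact low _ _ (by omega) h h3 (by omega)
      · exact (low _ _ (by omega) h h10 (by omega)).symm
    exact (e1.trans (RIn.of_adj h11 e1.right_mem e2.left_mem)).trans e2
  rintro x ⟨⟨j, h1, h2, rfl⟩, h3⟩ y ⟨⟨k, h4, h5, rfl⟩, h6⟩
  have h3' : j ≠ i := fun e => h3 (by simp [e])
  have h6' : k ≠ i := fun e => h6 (by simp [e])
  rcases le_total j k with h | h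
  · exact key j k h1 h h5 h3' h6'
  · exact (key k j h4 h h2 h6' h3').symm

theorem univ_eq (h : HamEnum G m v) : Seg_s17 v 0 m = Set.univ :=
  Set.eq_univ_of_forall fun x =>
    let ⟨i, h1, h2⟩ := h.surj x
    ⟨i, Nat.zero_le _, h1, h2⟩

/-- A cut-vertex is an interior vertex of the path, and no edge jumps over it. -/
theorem not_jump (h : HamEnum G m v) {i : ℕ} (hi : i ≤ m) (hc : IsCutVertex G (v i)) :
    0 < i ∧ i < m ∧ ∀ a b, a < i → i < b → b ≤ m → ¬ G.Adj (v a) (v b) := by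
  by_contra! hcon
  refine not_isCutVertex_iff.2 (fun x y hx hy => ?_) hc
  refine (h.rIn_seg_diff (a := 0) le_rfl hi ?_ x ?_ y ?_).mono fun u hu => hu.2
  · intro h1 h2
    obtain ⟨a, b, h3, h4, h5, h6⟩ := hcon h1 h2
    exact ⟨a, b, Nat.zero_le _, h3, h4, h5, h6⟩
  · exact ⟨h.univ_eq ▸ trivial, hx⟩
  · exact ⟨h.univ_eq ▸ trivial, hy⟩

/-- A set without cut-vertices of its own does not extend to both sides of a cut-vertex. -/
theorem not_sep (h : HamEnum G m v) {B : Set V} (hB : NoCut G B) {i c j : ℕ}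
    (hc : IsCutVertex G (v c)) (hic : i < c) (hcj : c < j) (hj : j ≤ m)
    (hi : v i ∈ B) (hj' : v j ∈ B) : False := by
  have ne : ∀ l, l ≤ m → l ≠ c → v l ≠ v c := fun l hl hlc e =>
    hlc (h.inj l c hl (by omega) e)
  obtain ⟨l, hl, e⟩ := (hB.2.2 (v c) (v i) ⟨hi, ne i (by omega) (by omega)⟩ (v j)
    ⟨hj', ne j hj (by omega)⟩).induct (fun x => ∃ l < c, x = v l) ⟨i, hic, rfl⟩ (by
      rintro _ b - hb hab ⟨l, hl, rfl⟩
      obtain ⟨k, hk, rfl⟩ := h.surj b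
      refine ⟨k, ?_, rfl⟩
      by_contra hkc
      have : k ≠ c := by
        rintro rfl
        exact hb.2 rfl
      exact (h.not_jump (by omega) hc).2.2 l k hl (by omega) hk hab)
  have := h.inj _ _ hj (by omega) e
  omega

theorem exists_jump (h : HamEnum G m v) {i : ℕ} (h0 : 0 < i) (hm : i < m)
    (hc : ¬ IsCutVertex G (v i)) : ∃ a b, a < i ∧ i < b ∧ b ≤ m ∧ G.Adj (v a) (v b) := by
  by_contra! hcon
  have ne : ∀ l, l ≤ m → l ≠ i → v l ≠ v i := fun l hl hlc e =>
    hlc (h.inj l i hl (by omega) e)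
  obtain ⟨l, hl, e⟩ := (not_isCutVertex_iff.1 hc (v 0) (v m) (ne _ (by omega) (by omega))
    (ne _ le_rfl (by omega))).induct (fun x => ∃ l < i, x = v l) ⟨0, h0, rfl⟩ (by
      rintro _ b - hb hab ⟨l, hl, rfl⟩
      obtain ⟨k, hk, rfl⟩ := h.surj b
      refine ⟨k, ?_, rfl⟩
      by_contra hkc
      have : k ≠ i := by
        rintro rfl
        exact hb rfl
      exact hcon l k hl (by omega) hk hab)
  have := h.inj _ _ le_rfl (by omega) e
  omega

/-- The segments between consecutive cut-vertices (or ends) of a Hamiltonian path are blocks. -/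
theorem isBlock_seg (h : HamEnum G m v) {a b : ℕ} (hab : a < b) (hb : b ≤ m)
    (ha : a = 0 ∨ IsCutVertex G (v a)) (hb' : b = m ∨ IsCutVertex G (v b))
    (hin : ∀ i, a < i → i < b → ¬ IsCutVertex G (v i)) : IsBlock G (Seg_s17 v a b) := by
  have hI : ∀ i, i ≤ m → ∀ x ∈ Seg_s17 v a b \ {v i}, ∀ y ∈ Seg_s17 v a b \ {v i},
      RIn G (Seg_s17 v a b \ {v i}) x y := by
    intro i hi
    refine h.rIn_seg_diff hb hi fun h1 h2 => ?_
    obtain ⟨a', b', h3, h4, h5, h6⟩ := h.exists_jump (by omega) (by omega) (hin i h1 h2)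
    refine ⟨a', b', ?_, h3, h4, ?_, h6⟩
    · by_contra hlt
      exact (h.not_jump (by omega) (ha.resolve_left (by omega))).2.2 a' b' (by omega) (by omega)
        h5 h6
    · by_contra hlt
      exact (h.not_jump (by omega) (hb'.resolve_left (by omega))).2.2 a' b' (by omega) (by omega)
        h5 h6
  have hva : v a ∈ Seg_s17 v a b := ⟨a, le_rfl, hab.le, rfl⟩
  have hvb : v b ∈ Seg_s17 v a b := ⟨b, hab.le, le_rfl, rfl⟩
  rw [isBlock_iff]
  refine ⟨⟨⟨v a, hva⟩, ?_, fun w => ?_⟩, fun B' hs hB' => hs.antisymm fun x hx => ?_⟩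
  · have hub : ∀ x ∈ Seg_s17 v a b, RIn G (Seg_s17 v a b) x (v a) := by
      rintro x ⟨i, h1, h2, rfl⟩
      exact ((h.rIn_seg h1 (h2.trans hb)).mono (Seg_s17.mono le_rfl h2)).symm
    exact fun x hx y hy => (hub x hx).trans (hub y hy).symm
  · obtain ⟨i, hi, rfl⟩ := h.surj w
    exact hI i hi
  · obtain ⟨q, hq, rfl⟩ := h.surj x
    rw [h.mem_seg hb hq]
    by_contra hcon
    by_cases hqa : q < a
    · exact h.not_sep hB' (ha.resolve_left (by omega)) hqa hab hb hx (hs hvb)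
    · exact h.not_sep hB' (hb'.resolve_left (by omega)) hab (by omega) hq (hs hva) hx

end HamEnum

/-- Increasing enumeration `d 0 = 0 < d 1 < … < d (k + 1) = m` of the numbers with property `p`. -/
theorem exists_enum (p : ℕ → Prop) {m : ℕ} (hm : 0 < m) (h0 : p 0) (hpm : p m)
    (hle : ∀ i, p i → i ≤ m) :
    ∃ (k : ℕ) (d : ℕ → ℕ), d 0 = 0 ∧ d (k + 1) = m ∧ (∀ i j, i < j → j ≤ k + 1 → d i < d j) ∧
      ∀ i, p i ↔ ∃ j ≤ k + 1, d j = i := by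
  have hf : {i | p i}.Finite := (Set.finite_Iic m).subset hle
  have hcard : 1 < hf.toFinset.card :=
    Finset.one_lt_card.2 ⟨0, by simpa using h0, m, by simpa using hpm, hm.ne⟩
  obtain ⟨k, hk⟩ : ∃ k, hf.toFinset.card = k + 2 := ⟨hf.toFinset.card - 2, by omega⟩
  have mono : ∀ i j, i < j → j ≤ k + 1 → Nat.nth p i < Nat.nth p j := fun i j hij hj =>
    Nat.nth_strictMonoOn hf (by simp only [Set.mem_Iio]; omega)
      (by simp only [Set.mem_Iio]; omega) hij
  have iff : ∀ i, p i ↔ ∃ j ≤ k + 1, Nat.nth p j = i := by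
    intro i
    constructor
    · intro hi
      obtain ⟨j, hj, e⟩ := Nat.exists_lt_card_finite_nth_eq hf hi
      exact ⟨j, by omega, e⟩
    · rintro ⟨j, hj, rfl⟩
      exact Nat.nth_mem_of_lt_card hf (by omega)
  refine ⟨k, Nat.nth p, ?_, ?_, mono, iff⟩
  · obtain ⟨j, hj, e⟩ := (iff 0).1 h0
    rcases Nat.eq_zero_or_pos j with rfl | hpos
    · exact e
    · have := mono 0 j hpos hj
      omega
  · obtain ⟨j, hj, e⟩ := (iff m).1 hpm
    rcases hj.eq_or_lt with rfl | hlt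
    · exact e
    · have := mono j (k + 1) hlt le_rfl
      have := hle _ ((iff _).2 ⟨k + 1, le_rfl, rfl⟩)
      omega

/-- The block-cutpoint tree of a graph with a Hamiltonian path is a path: the cut-vertices, in the
order of the Hamiltonian path, alternate with the segments between them, which are the blocks. -/
theorem HamEnum.inducesPath_of_pos {m : ℕ} {v : ℕ → V} (h : HamEnum G m v) (hm : 0 < m) :
    InducesPath (bcGraph G) (Set.univ : Set (BCVert G)) := by
  classical
  -- `d 0 < d 1 < … < d (k + 1)` are the positions of the two ends and of the cut-vertices
  obtain ⟨k, d, d0, dm, dmono, dmem⟩ := exists_enum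
    (fun i => i ≤ m ∧ (i = 0 ∨ i = m ∨ IsCutVertex G (v i))) hm ⟨hm.le, Or.inl rfl⟩
    ⟨le_rfl, Or.inr (Or.inl rfl)⟩ fun i hi => hi.1
  have dle : ∀ j, j ≤ k + 1 → d j ≤ m := fun j hj => ((dmem _).2 ⟨j, hj, rfl⟩).1
  have dmono' : ∀ i j, i ≤ k + 1 → j ≤ k + 1 → (d i ≤ d j ↔ i ≤ j) := by
    intro i j hi hj
    constructor
    · intro hij
      by_contra hlt
      have := dmono j i (by omega) hi
      omega
    · intro hij
      rcases hij.eq_or_lt with rfl | hlt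
      · exact le_rfl
      · exact (dmono i j hlt hj).le
  have dinj : ∀ i j, i ≤ k + 1 → j ≤ k + 1 → d i = d j → i = j := by
    intro i j hi hj e
    have h1 := (dmono' i j hi hj).1 e.le
    have h2 := (dmono' j i hj hi).1 e.ge
    omega
  have cutD : ∀ j, 0 < j → j ≤ k → IsCutVertex G (v (d j)) := by
    intro j h1 h2
    have h3 := dmono 0 j h1 (by omega)
    have h4 := dmono j (k + 1) (by omega) le_rfl
    rcases ((dmem _).2 ⟨j, by omega, rfl⟩).2 with h5 | h5 | h5
    · omega
    · omega
    · exact h5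
  have cutD' : ∀ w, IsCutVertex G w → ∃ j, 0 < j ∧ j ≤ k ∧ w = v (d j) := by
    intro w hw
    obtain ⟨i, hi, rfl⟩ := h.surj w
    obtain ⟨j, hj, rfl⟩ := (dmem i).1 ⟨hi, Or.inr (Or.inr hw)⟩
    have := h.not_jump hi hw
    refine ⟨j, Nat.pos_of_ne_zero ?_, ?_, rfl⟩
    · rintro rfl
      omega
    · by_contra hjk
      rw [show j = k + 1 by omega] at this
      omega
  have blockD : ∀ j, j ≤ k → IsBlock G (Seg_s17 v (d j) (d (j + 1))) := by
    intro j hj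
    refine h.isBlock_seg (dmono _ _ (by omega) (by omega)) (dle _ (by omega)) ?_ ?_ ?_
    · rcases Nat.eq_zero_or_pos j with rfl | h0
      · exact Or.inl d0
      · exact Or.inr (cutD j h0 hj)
    · rcases hj.eq_or_lt with rfl | h0
      · exact Or.inl dm
      · exact Or.inr (cutD (j + 1) (by omega) (by omega))
    · intro i h1 h2 hc
      obtain ⟨l, hl, rfl⟩ := (dmem i).1
        ⟨by have := dle (j + 1) (by omega); omega, Or.inr (Or.inr hc)⟩
      have h3 := mt (dmono' l j hl (by omega)).2 (by omega)
      have h4 := mt (dmono' (j + 1) l (by omega) hl).2 (by omega)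
      omega
  have blockD' : ∀ B, IsBlock G B → ∃ j ≤ k, B = Seg_s17 v (d j) (d (j + 1)) := by
    intro B hB
    have hB' := isBlock_iff.1 hB
    -- `q` is the first position of `B`, and `d j` the last of the marked positions up to `q`
    have hex : ∃ q, q ≤ m ∧ v q ∈ B := by
      obtain ⟨x, hx⟩ := hB'.1.1
      obtain ⟨q, hq, rfl⟩ := h.surj x
      exact ⟨q, hq, hx⟩
    obtain ⟨q, ⟨hq, hqB⟩, hmin⟩ : ∃ q, (q ≤ m ∧ v q ∈ B) ∧ ∀ r, r ≤ m → v r ∈ B → q ≤ r :=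
      ⟨Nat.find hex, Nat.find_spec hex, fun r h1 h2 => Nat.find_min' hex ⟨h1, h2⟩⟩
    obtain ⟨j, hjk, hjq, hjmax⟩ : ∃ j ≤ k, d j ≤ q ∧ (j < k → q < d (j + 1)) := by
      refine ⟨Nat.findGreatest (fun j => d j ≤ q) k, Nat.findGreatest_le k,
        Nat.findGreatest_spec (P := fun j => d j ≤ q) (Nat.zero_le k) (by omega), fun hlt => ?_⟩
      exact not_le.1 (Nat.findGreatest_is_greatest (P := fun j => d j ≤ q) (Nat.lt_succ_self _) hlt)
    refine ⟨j, hjk, hB'.2 _ (fun x hx => ?_) (isBlock_iff.1 (blockD j hjk)).1⟩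
    obtain ⟨r, hr, rfl⟩ := h.surj x
    have hqr := hmin r hr hx
    refine ⟨r, by omega, ?_, rfl⟩
    by_contra hlt
    have hjk' : j < k := by
      by_contra hc
      rw [show j = k by omega] at hlt
      omega
    exact h.not_sep hB'.1 (cutD (j + 1) (by omega) (by omega)) (hjmax hjk') (by omega) hr hqB hx
  -- even indices enumerate the blocks, odd indices the cut-vertices
  have hex : ∀ i : Fin (2 * k + 1), ∃ N : BCVert G,
      (∀ b, i.val = 2 * b → ∃ hB, N = Sum.inr ⟨Seg_s17 v (d b) (d (b + 1)), hB⟩) ∧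
      ∀ b, i.val = 2 * b + 1 → ∃ hc, N = Sum.inl ⟨v (d (b + 1)), hc⟩ := by
    intro i
    have hi := i.isLt
    obtain ⟨b, hb | hb⟩ := Nat.even_or_odd' i.val
    · refine ⟨Sum.inr ⟨_, blockD b (by omega)⟩, fun b' hb' => ?_, fun b' hb' => by omega⟩
      obtain rfl : b = b' := by omega
      exact ⟨blockD b (by omega), rfl⟩
    · refine ⟨Sum.inl ⟨_, cutD (b + 1) (by omega) (by omega)⟩, fun b' hb' => by omega,
        fun b' hb' => ?_⟩
      obtain rfl : b = b' := by omega
      exact ⟨cutD (b + 1) (by omega) (by omega), rfl⟩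
  choose f fE fO using hex
  have mem : ∀ a b, a < k → b ≤ k →
      (v (d (a + 1)) ∈ Seg_s17 v (d b) (d (b + 1)) ↔ b ≤ a + 1 ∧ a ≤ b) := by
    intro a b ha hb
    rw [h.mem_seg (dle _ (by omega)) (dle _ (by omega)), dmono' _ _ (by omega) (by omega),
      dmono' _ _ (by omega) (by omega), Nat.add_le_add_iff_right]
  refine ⟨2 * k, f, ?_, ?_, ?_⟩
  · intro i j hij
    have hi := i.isLt
    have hj := j.isLt
    obtain ⟨a, ha | ha⟩ := Nat.even_or_odd' i.val <;>
      obtain ⟨b, hb | hb⟩ := Nat.even_or_odd' j.val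
    · obtain ⟨h1, e1⟩ := fE i a ha
      obtain ⟨h2, e2⟩ := fE j b hb
      have e := congrArg Subtype.val (Sum.inr_injective (e1.symm.trans (hij.trans e2)))
      replace e : Seg_s17 v (d a) (d (a + 1)) = Seg_s17 v (d b) (d (b + 1)) := e
      have h3 : v (d a) ∈ Seg_s17 v (d b) (d (b + 1)) := e ▸ ⟨d a, le_rfl, by
        rw [dmono'] <;> omega, rfl⟩
      have h4 : v (d b) ∈ Seg_s17 v (d a) (d (a + 1)) := e ▸ ⟨d b, le_rfl, by
        rw [dmono'] <;> omega, rfl⟩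
      rw [h.mem_seg (dle _ (by omega)) (dle _ (by omega))] at h3 h4
      have := dinj a b (by omega) (by omega) (by omega)
      ext
      omega
    · obtain ⟨h1, e1⟩ := fE i a ha
      obtain ⟨h2, e2⟩ := fO j b hb
      cases e1.symm.trans (hij.trans e2)
    · obtain ⟨h1, e1⟩ := fO i a ha
      obtain ⟨h2, e2⟩ := fE j b hb
      cases e1.symm.trans (hij.trans e2)
    · obtain ⟨h1, e1⟩ := fO i a ha
      obtain ⟨h2, e2⟩ := fO j b hb
      have e := congrArg Subtype.val (Sum.inl_injective (e1.symm.trans (hij.trans e2)))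
      have := dinj _ _ (by omega) (by omega)
        (h.inj _ _ (dle _ (by omega)) (dle _ (by omega)) e)
      ext
      omega
  · refine Set.eq_univ_of_forall ?_
    rintro (⟨w, hw⟩ | ⟨B, hB⟩)
    · obtain ⟨j, h1, h2, rfl⟩ := cutD' w hw
      obtain ⟨j, rfl⟩ : ∃ j', j = j' + 1 := ⟨j - 1, by omega⟩
      obtain ⟨h3, e⟩ := fO ⟨2 * j + 1, by omega⟩ j rfl
      exact ⟨_, e⟩
    · obtain ⟨j, h1, rfl⟩ := blockD' B hB
      obtain ⟨h3, e⟩ := fE ⟨2 * j, by omega⟩ j rfl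
      exact ⟨_, e⟩
  · intro i j
    have hi := i.isLt
    have hj := j.isLt
    obtain ⟨a, ha | ha⟩ := Nat.even_or_odd' i.val <;>
      obtain ⟨b, hb | hb⟩ := Nat.even_or_odd' j.val
    · obtain ⟨h1, e1⟩ := fE i a ha
      obtain ⟨h2, e2⟩ := fE j b hb
      rw [e1, e2]
      exact iff_of_false not_bcGraph_adj_inr_inr (by omega)
    · obtain ⟨h1, e1⟩ := fE i a ha
      obtain ⟨h2, e2⟩ := fO j b hb
      rw [e1, e2]
      refine ((bcGraph G).adj_comm _ _).trans
        (bcGraph_adj_inl_inr.trans ((mem b a (by omega) (by omega)).trans ?_))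
      omega
    · obtain ⟨h1, e1⟩ := fO i a ha
      obtain ⟨h2, e2⟩ := fE j b hb
      rw [e1, e2]
      refine bcGraph_adj_inl_inr.trans ((mem a b (by omega) (by omega)).trans ?_)
      omega
    · obtain ⟨h1, e1⟩ := fO i a ha
      obtain ⟨h2, e2⟩ := fO j b hb
      rw [e1, e2]
      exact iff_of_false not_bcGraph_adj_inl_inl (by omega)

/-- A graph with a single vertex has one block and no cut-vertex. -/
theorem inducesPath_of_subsingleton [Subsingleton V] [Nonempty V] :
    InducesPath (bcGraph G) (Set.univ : Set (BCVert G)) := by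
  have hr : ∀ (S : Set V), ∀ x ∈ S, ∀ y ∈ S, RIn G S x y := fun S x hx y _ =>
    Subsingleton.elim x y ▸ RIn.refl hx
  have huniv : IsBlock G Set.univ := isBlock_iff.2
    ⟨⟨Set.univ_nonempty, hr _, fun w => hr _⟩, fun B' h _ => (Set.univ_subset_iff.1 h).symm⟩
  refine ⟨0, fun _ => Sum.inr ⟨Set.univ, huniv⟩, fun i j _ => Fin.ext (by omega),
    Set.eq_univ_of_forall ?_, fun i j => iff_of_false ((bcGraph G).loopless.irrefl _) (by omega)⟩
  rintro (⟨w, hw⟩ | ⟨B, hB⟩)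
  · obtain ⟨x, y, hx, -⟩ := isCutVertex_iff.1 hw
    exact absurd (Subsingleton.elim x w) hx
  · have e := (isBlock_iff.1 hB).1.1.eq_univ
    subst e
    exact ⟨0, rfl⟩

theorem inducesPath_of_isHamiltonian [DecidableEq V] {a b : V} {p : G.Walk a b}
    (hp : p.IsHamiltonian) : InducesPath (bcGraph G) (Set.univ : Set (BCVert G)) := by
  have h : HamEnum G p.length p.getVert := by
    refine ⟨fun i j hi hj e => hp.isPath.getVert_injOn hi hj e, fun x => ?_,
      fun i hi => p.adj_getVert_succ hi⟩
    obtain ⟨i, e, hi⟩ := Walk.mem_support_iff_exists_getVert.1 (hp.mem_support x)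
    exact ⟨i, hi, e.symm⟩
  rcases Nat.eq_zero_or_pos p.length with h0 | h0
  · have : Subsingleton V := ⟨fun x y => by
      obtain ⟨i, hi, rfl⟩ := h.surj x
      obtain ⟨j, hj, rfl⟩ := h.surj y
      rw [show i = j by omega]⟩
    have : Nonempty V := ⟨a⟩
    exact inducesPath_of_subsingleton
  · exact h.inducesPath_of_pos h0

end

/-- a finite connected claw-free chordal graph has a Hamiltonian path
iff its block-cutpoint tree is a path (a single node counting as a path). -/
theorem stmt_17 {V : Type*} [Fintype V] [DecidableEq V] (G : SimpleGraph V)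
    (hconn : G.Connected) (hclaw : ClawFree G) (hchord : Chordal G) :
    (∃ (a b : V) (p : G.Walk a b), p.IsHamiltonian) ↔
      InducesPath (bcGraph G) (Set.univ : Set (BCVert G)) := by
  constructor
  · rintro ⟨a, b, p, hp⟩
    exact inducesPath_of_isHamiltonian hp
  · intro h
    obtain ⟨s, t, hA⟩ := exists_adm_of_inducesPath hconn h
    exact exists_isHamiltonian_of_adm hconn hclaw hchord hA
end
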